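/- arXiv:2502.11615 — 3 statements merged into one kernel-verified Lean document; each statement's English description precedes it below -/
import Mathlib

section
/- Let R_n be as above and let int Δ_{n−1} = { s ∈ (0,1)^n : Σ_{i<n} s(i) = 1 } be the open (n−1)-simplex. Then the product R_n × int Δ_{n−1}, with the supremum metric, has covering dimension (n+2)(n−1)/2. -/
/-- `[n]²`: the set of 2-element subsets of `{0, …, n-1}`. -/
abbrev Pairs (n : ℕ) := {s : Finset (Fin n) // s.card = 2}

/-- The 2-element subset `{i, j}` for `i ≠ j`. -/
def pairOf {n : ℕ} (i j : Fin n) (h : i ≠ j) : Pairs n :=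
  ⟨{i, j}, Finset.card_pair h⟩

/-- `R_n ⊆ (0,∞)^{[n]²}`. -/
def RnSet (n : ℕ) : Set (Pairs n → ℝ) :=
  {r | (∀ e, 0 < r e) ∧
    ∀ (i j k : Fin n) (hij : i ≠ j) (hjk : j ≠ k) (hik : i ≠ k),
      r (pairOf i k hik) ≤ r (pairOf i j hij) + r (pairOf j k hjk)}

/-- The open `(n-1)`-simplex: strictly positive weights summing to `1`. -/
def SimplexSet (n : ℕ) : Set (Fin n → ℝ) :=
  {s | (∀ i, 0 < s i) ∧ ∑ i, s i = 1}

/-- The covering dimension of `X` is at most `n`. -/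
def CovDimLE (X : Type*) [TopologicalSpace X] (n : ℕ) : Prop :=
  ∀ U : Set (Set X), (∀ u ∈ U, IsOpen u) → ⋃₀ U = Set.univ →
    ∃ V : Set (Set X), (∀ v ∈ V, IsOpen v) ∧ ⋃₀ V = Set.univ ∧
      (∀ v ∈ V, ∃ u ∈ U, v ⊆ u) ∧ ∀ x : X, {v ∈ V | x ∈ v}.encard ≤ (n : ℕ∞) + 1

/-- The covering dimension of a topological space. -/
noncomputable def covDim (X : Type*) [TopologicalSpace X] : ℕ∞ :=
  sInf {m : ℕ∞ | ∃ k : ℕ, m = (k : ℕ∞) ∧ CovDimLE X k}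

/-!
Dropping one barycentric coordinate embeds the product in a finite-dimensional real vector space,
with nonempty interior in it; such a subspace has the dimension of the vector space.

Upper bound: for each of `d + 1` integer multiples of `√2`, shift the dyadic grids of `ℝᵈ` by it and
take the largest open dyadic boxes subordinate to a given open cover; they are pairwise disjoint. A
point is missed by the boxes of a shift only if one of its coordinates minus the shift is rational,
and a coordinate does this for at most one shift; so some shift covers the point.

Lower bound: the space contains a closed cube, so it suffices that a cover of the cube without
members meeting two opposite faces has `d + 1` members with a common point. Sending the vertices of
Kuhn's triangulation of a fine grid to vertices of the simplex according to the members containing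
them gives a simplexwise affine map whose total volume, modulo 2 and in units of `1 / d!`, depends
only on the boundary. By induction on `d` it is `1`, so some cell has a nondegenerate image.
-/

section KuhnTriangulation

open Finset

theorem det_updateCol_one_of_row_sum_eq_one {n R : Type*} [Fintype n]
    [DecidableEq n] [CommRing R] (A : Matrix n n R) (j : n)
    (hA : ∀ i, ∑ k, A i k = 1) : (A.updateCol j 1).det = A.det := by
  have h := A.det_updateCol_sum j 1
  simpa [hA, Pi.one_def] using h

/-- A `d`-simplex of Kuhn's triangulation of the integer grid: a base vertex together with the order
in which the coordinates are raised by one. For a cell `p`, `p.2 i` is the step at which coordinate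
`i` is raised. -/
abbrev KuhnCell (d : ℕ) := (Fin d → ℕ) × Equiv.Perm (Fin d)

namespace KuhnCell

variable {d N : ℕ} {R : Type*} [CommRing R] {z : (Fin d → ℕ) → Fin d → R}

/-- The vertex of a Kuhn cell reached after `j` steps. -/
def vertex (p : KuhnCell d) (j : Fin (d + 1)) : Fin d → ℕ :=
  fun i ↦ p.1 i + if (p.2 i).castSucc < j then 1 else 0

/-- The Kuhn cells triangulating the cube `[0, N]ᵈ`. -/
def cube (d N : ℕ) : Finset (KuhnCell d) :=
  (Fintype.piFinset fun _ ↦ range N) ×ˢ univ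

/-- The signed volume, in units of `1 / d!`, of the image of a cell under the simplexwise affine
extension of `z`. -/
def imageVolume (z : (Fin d → ℕ) → Fin d → R) (p : KuhnCell d) : R :=
  (Matrix.of fun j ↦ (Fin.cons 1 (z (p.vertex j)) : Fin (d + 1) → R)).det

/-- The signed volume, in units of `1 / d!`, of the cone with apex `0` over the image of the facet
of `p` opposite to its `j`-th vertex. -/
def coneVolume (z : (Fin d → ℕ) → Fin d → R) (p : KuhnCell d) (j : Fin (d + 1)) : R :=
  (Matrix.of fun k ↦ z (p.vertex (j.succAbove k))).det

/-- Sperner's boundary condition for a map from the grid cube `[0, N]ᵈ` to the simplex with vertices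
`0, e₀, …, e_{d-1}`, in affine coordinates: the face `x i = 0` is mapped into the hyperplane
`y i = 0`, and the face `x i = N` into the affine span of `eᵢ, …, e_{d-1}`. -/
structure IsSperner (N : ℕ) (z : (Fin d → ℕ) → Fin d → R) : Prop where
  eq_zero_of_eq_zero : ∀ x i, x i = 0 → z x i = 0
  eq_zero_of_lt : ∀ x i j, x i = N → j < i → z x j = 0
  sum_eq_one : ∀ x i, x i = N → ∑ j, z x j = 1

theorem mem_cube {p : KuhnCell d} : p ∈ cube d N ↔ ∀ i, p.1 i < N := by
  simp [cube]

theorem injective_vertex_of_imageVolume_ne_zero {p : KuhnCell d} (h : imageVolume z p ≠ 0) :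
    Function.Injective fun j ↦ z (p.vertex j) := by
  intro j k hjk
  by_contra hne
  refine h (Matrix.det_zero_of_row_eq hne ?_)
  exact congrArg (fun y ↦ (Fin.cons 1 y : Fin (d + 1) → R)) hjk

theorem imageVolume_eq_sum_coneVolume [CharP R 2] (z : (Fin d → ℕ) → Fin d → R) (p : KuhnCell d) :
    imageVolume z p = ∑ j, coneVolume z p j := by
  simp only [imageVolume, Matrix.det_succ_column_zero, CharTwo.neg_eq, one_pow, one_mul,
    Matrix.of_apply, Fin.cons_zero]
  rfl

section Neighbours

/-- The cell sharing with `p` the facet opposite to vertex `j + 1`. -/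
def swapSteps (j : Fin d) (p : KuhnCell (d + 1)) : KuhnCell (d + 1) :=
  (p.1, p.2.trans (Equiv.swap j.castSucc j.succ))

theorem swapSteps_swapSteps (j : Fin d) (p : KuhnCell (d + 1)) :
    swapSteps j (swapSteps j p) = p := by
  ext <;> simp [swapSteps]

theorem swapSteps_ne (j : Fin d) (p : KuhnCell (d + 1)) : swapSteps j p ≠ p := by
  intro h
  have := congrArg (fun q ↦ q.2 (p.2.symm j.castSucc)) h
  simp [swapSteps, Fin.ext_iff] at this

theorem vertex_swapSteps {j : Fin d} {k : Fin (d + 2)} (hk : k ≠ j.succ.castSucc)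
    (p : KuhnCell (d + 1)) : (swapSteps j p).vertex k = p.vertex k := by
  have swap_lt (a : Fin (d + 1)) :
      (Equiv.swap j.castSucc j.succ a).castSucc < k ↔ a.castSucc < k := by
    rw [Equiv.swap_apply_def]
    simp only [Ne, Fin.ext_iff, Fin.lt_def, Fin.val_castSucc, Fin.val_succ] at hk ⊢
    split_ifs <;> simp only [Fin.val_castSucc, Fin.val_succ] <;> omega
  funext i
  simp only [vertex, swapSteps, Equiv.trans_apply, swap_lt]

/-- The cell whose facet opposite to its last vertex is the facet of `p` opposite to vertex `0`. -/
def next (p : KuhnCell (d + 1)) : KuhnCell (d + 1) :=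
  (p.1 + Pi.single (p.2.symm 0) 1, p.2.trans (Equiv.subRight 1))

/-- The cell whose facet opposite to vertex `0` is the facet of `p` opposite to its last vertex,
provided that the subtraction is not truncated. -/
def prev (p : KuhnCell (d + 1)) : KuhnCell (d + 1) :=
  (p.1 - Pi.single (p.2.symm (Fin.last d)) 1, p.2.trans (Equiv.addRight 1))

theorem prev_next (p : KuhnCell (d + 1)) : prev (next p) = p := by
  ext <;> simp [prev, next]

theorem next_prev {p : KuhnCell (d + 1)} (h : 0 < p.1 (p.2.symm (Fin.last d))) :
    next (prev p) = p := by
  have hle : Pi.single (p.2.symm (Fin.last d)) 1 ≤ p.1 := by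
    intro i
    obtain rfl | hi := eq_or_ne i (p.2.symm (Fin.last d))
    · simpa using Nat.one_le_iff_ne_zero.2 h.ne'
    · simp [hi]
  have hlast : -1 = Fin.last d := (neg_eq_iff_eq_neg.1 (Fin.neg_last d)).symm
  refine Prod.ext ?_ ?_
  · simp [prev, next, hlast, tsub_add_cancel_of_le hle]
  · ext; simp [prev, next]

theorem vertex_next (p : KuhnCell (d + 1)) (k : Fin (d + 1)) :
    (next p).vertex k.castSucc = p.vertex k.succ := by
  funext i
  obtain ⟨a, rfl⟩ := p.2.symm.surjective i
  cases a using Fin.cases with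
  | zero =>
    have : k ≤ -1 := (Fin.le_last k).trans_eq (neg_eq_iff_eq_neg.1 (Fin.neg_last d))
    simpa [next, vertex]
  | succ a =>
    have : a.succ - 1 = a.castSucc := sub_eq_of_eq_add a.coeSucc_eq_succ.symm
    simp [next, vertex, this]

theorem next_mem_cube {p : KuhnCell (d + 1)} :
    next p ∈ cube (d + 1) N ↔ p ∈ cube (d + 1) N ∧ p.1 (p.2.symm 0) + 1 < N := by
  simp only [mem_cube, next, Pi.add_apply]
  constructor
  · intro h
    exact ⟨fun i ↦ (Nat.le_add_right _ _).trans_lt (h i), by simpa using h (p.2.symm 0)⟩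
  · rintro ⟨h, h0⟩ i
    obtain rfl | hi := eq_or_ne i (p.2.symm 0)
    · simpa using h0
    · simpa [hi] using h i

theorem coneVolume_next (z : (Fin (d + 1) → ℕ) → Fin (d + 1) → R) (p : KuhnCell (d + 1)) :
    coneVolume z (next p) (Fin.last (d + 1)) = coneVolume z p 0 := by
  simp only [coneVolume, Fin.succAbove_last, Fin.succAbove_zero, vertex_next]

theorem sum_coneVolume_inner_eq_zero [CharP R 2] (N : ℕ)
    (z : (Fin (d + 1) → ℕ) → Fin (d + 1) → R) (j : Fin d) :
    ∑ p ∈ cube (d + 1) N, coneVolume z p j.succ.castSucc = 0 := by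
  refine sum_involution (fun p _ ↦ swapSteps j p) ?_ (fun p _ _ ↦ swapSteps_ne j p)
    (fun p hp ↦ by simpa [mem_cube, swapSteps] using hp) (fun p _ ↦ swapSteps_swapSteps j p)
  intro p _
  have : coneVolume z (swapSteps j p) j.succ.castSucc = coneVolume z p j.succ.castSucc := by
    simp only [coneVolume, vertex_swapSteps (Fin.succAbove_ne _ _)]
  rw [this, CharTwo.add_self_eq_zero]

theorem sum_coneVolume_zero_eq_sum_coneVolume_last (N : ℕ)
    (z : (Fin (d + 1) → ℕ) → Fin (d + 1) → R) :
    ∑ p ∈ cube (d + 1) N with p.1 (p.2.symm 0) + 1 < N, coneVolume z p 0 =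
      ∑ p ∈ cube (d + 1) N with 0 < p.1 (p.2.symm (Fin.last d)),
        coneVolume z p (Fin.last (d + 1)) := by
  refine sum_nbij' next prev ?_ ?_ (fun p _ ↦ prev_next p) ?_ (fun p _ ↦ (coneVolume_next z p).symm)
  · intro p hp
    rw [mem_filter] at hp ⊢
    exact ⟨next_mem_cube.2 hp, by simp [next]⟩
  · intro p hp
    rw [mem_filter] at hp ⊢
    rw [← next_mem_cube, next_prev hp.2]
    exact hp.1
  · intro p hp
    exact next_prev (mem_filter.1 hp).2

end Neighbours

section Boundary

variable {z : (Fin (d + 1) → ℕ) → Fin (d + 1) → R}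

theorem coneVolume_last_eq_zero (hz : IsSperner N z) {p : KuhnCell (d + 1)}
    (hp : p.1 (p.2.symm (Fin.last d)) = 0) : coneVolume z p (Fin.last (d + 1)) = 0 := by
  refine Matrix.det_eq_zero_of_column_eq_zero (p.2.symm (Fin.last d)) fun k ↦ ?_
  refine hz.eq_zero_of_eq_zero _ _ ?_
  simp [vertex, hp, Fin.le_last]

theorem vertex_succ_eq {p : KuhnCell (d + 1)} (hp : p.1 (p.2.symm 0) + 1 = N) (k : Fin (d + 1)) :
    p.vertex k.succ (p.2.symm 0) = N := by
  simp [vertex, hp]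

theorem coneVolume_zero_eq_zero (hz : IsSperner N z) {p : KuhnCell (d + 1)}
    (hp : p.1 (p.2.symm 0) + 1 = N) (h0 : p.2.symm 0 ≠ 0) : coneVolume z p 0 = 0 :=
  Matrix.det_eq_zero_of_column_eq_zero 0 fun k ↦
    hz.eq_zero_of_lt _ _ _ (by simpa using vertex_succ_eq hp k) (Fin.pos_iff_ne_zero.2 h0)

/-- The Kuhn cell of the face `x 0 = M + 1` of the cube of side `M + 1`, extended to the unique cell
of the cube having it as the facet opposite to vertex `0`. -/
def cons (M : ℕ) (p : KuhnCell d) : KuhnCell (d + 1) :=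
  (Fin.cons M p.1, Equiv.Perm.decomposeFin.symm (0, p.2))

/-- The restriction of `z` to the face `x 0 = N`, in the affine coordinates other than the first. -/
def tailOnFace (N : ℕ) (z : (Fin (d + 1) → ℕ) → Fin (d + 1) → R) : (Fin d → ℕ) → Fin d → R :=
  fun x ↦ Fin.tail (z (Fin.cons N x))

theorem IsSperner.tailOnFace (hz : IsSperner N z) : IsSperner N (tailOnFace N z) where
  eq_zero_of_eq_zero x i hx := hz.eq_zero_of_eq_zero _ i.succ (by simpa using hx)
  eq_zero_of_lt x i j hx hj :=
    hz.eq_zero_of_lt _ i.succ j.succ (by simpa using hx) (Fin.succ_lt_succ_iff.2 hj)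
  sum_eq_one x i hx := by
    have h0 : z (Fin.cons N x) 0 = 0 :=
      hz.eq_zero_of_lt _ i.succ 0 (by simpa using hx) (Fin.succ_pos i)
    have hsum := hz.sum_eq_one (Fin.cons N x) 0 (Fin.cons_zero _ _)
    rwa [Fin.sum_univ_succ, h0, zero_add] at hsum

theorem vertex_cons (M : ℕ) (p : KuhnCell d) (k : Fin (d + 1)) :
    (cons M p).vertex k.succ = Fin.cons (M + 1) (p.vertex k) := by
  funext i
  cases i using Fin.cases with
  | zero => simp [cons, vertex]
  | succ i => simp [cons, vertex]

theorem coneVolume_cons {M : ℕ} (hz : IsSperner (M + 1) z) (p : KuhnCell d) :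
    coneVolume z (cons M p) 0 = imageVolume (tailOnFace (M + 1) z) p := by
  have row_sum (k : Fin (d + 1)) : ∑ l, z ((cons M p).vertex k.succ) l = 1 :=
    hz.sum_eq_one _ 0 (by simp [vertex_cons])
  simp only [coneVolume, Fin.succAbove_zero, imageVolume]
  rw [← det_updateCol_one_of_row_sum_eq_one (Matrix.of _) 0 row_sum]
  congr 1
  ext k l
  cases l using Fin.cases with
  | zero => simp
  | succ l => simp [vertex_cons, KuhnCell.tailOnFace, Fin.tail]

theorem cons_mem_cube {M : ℕ} {p : KuhnCell d} :
    cons M p ∈ cube (d + 1) (M + 1) ↔ p ∈ cube d (M + 1) := by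
  simp [mem_cube, cons, Fin.forall_fin_succ]

theorem cons_symm_zero (M : ℕ) (p : KuhnCell d) : (cons M p).2.symm 0 = 0 := by
  rw [Equiv.symm_apply_eq]
  exact (Equiv.Perm.decomposeFin_symm_apply_zero 0 p.2).symm

theorem cons_injective (M : ℕ) : Function.Injective (cons M : KuhnCell d → KuhnCell (d + 1)) := by
  intro p q h
  simpa [cons, Prod.ext_iff] using h

theorem exists_cons_eq {p : KuhnCell (d + 1)} (h : p.2.symm 0 = 0) :
    ∃ q, cons (p.1 0) q = p := by
  obtain ⟨⟨a, σ⟩, hσ⟩ := Equiv.Perm.decomposeFin.symm.surjective p.2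
  have ha : a = 0 := by
    rw [← Equiv.Perm.decomposeFin_symm_apply_zero a σ, hσ, ← Equiv.eq_symm_apply, h]
  subst ha
  exact ⟨(Fin.tail p.1, σ), Prod.ext (Fin.cons_self_tail p.1) hσ⟩

theorem sum_coneVolume_face {M : ℕ} (hz : IsSperner (M + 1) z) :
    ∑ p ∈ cube (d + 1) (M + 1) with ¬p.1 (p.2.symm 0) + 1 < M + 1, coneVolume z p 0 =
      ∑ p ∈ cube d (M + 1), imageVolume (tailOnFace (M + 1) z) p := by
  symm
  refine sum_of_injOn (cons M) (cons_injective M).injOn ?_ ?_ fun p _ ↦ (coneVolume_cons hz p).symm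
  · intro p hp
    rw [mem_coe] at hp
    rw [mem_coe, mem_filter, cons_symm_zero]
    exact ⟨cons_mem_cube.2 hp, by simp [cons]⟩
  · intro p hp hp_range
    obtain ⟨hp, hle⟩ := mem_filter.1 hp
    have hM : p.1 (p.2.symm 0) + 1 = M + 1 := by
      have := mem_cube.1 hp (p.2.symm 0)
      omega
    refine coneVolume_zero_eq_zero hz hM fun h0 ↦ hp_range ?_
    obtain ⟨q, hq⟩ := exists_cons_eq h0
    obtain rfl : p.1 0 = M := by rw [h0] at hM; omega
    exact ⟨q, mem_coe.2 (cons_mem_cube.1 (hq ▸ hp)), hq⟩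

theorem sum_imageVolume_eq_one [CharP R 2] {d M : ℕ} {z : (Fin d → ℕ) → Fin d → R}
    (hz : IsSperner (M + 1) z) : ∑ p ∈ cube d (M + 1), imageVolume z p = 1 := by
  induction d with
  | zero => simp [imageVolume, cube]
  | succ d ih =>
    have hlast : ∑ p ∈ cube (d + 1) (M + 1) with 0 < p.1 (p.2.symm (Fin.last d)),
        coneVolume z p (Fin.last (d + 1)) =
          ∑ p ∈ cube (d + 1) (M + 1), coneVolume z p (Fin.last (d + 1)) :=
      sum_filter_of_ne fun p _ hp ↦ Nat.pos_of_ne_zero (mt (coneVolume_last_eq_zero hz) hp)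
    have hzero : ∑ p ∈ cube (d + 1) (M + 1), coneVolume z p 0 =
        ∑ p ∈ cube (d + 1) (M + 1), coneVolume z p (Fin.last (d + 1)) + 1 := by
      rw [← hlast, ← sum_coneVolume_zero_eq_sum_coneVolume_last, ← ih hz.tailOnFace,
        ← sum_coneVolume_face hz, sum_filter_add_sum_filter_not]
    simp only [imageVolume_eq_sum_coneVolume]
    rw [sum_comm, Fin.sum_univ_succ, Fin.sum_univ_castSucc, hzero]
    simp only [Fin.succ_castSucc, sum_coneVolume_inner_eq_zero, sum_const_zero, zero_add,
      Fin.succ_last]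
    rw [add_right_comm, CharTwo.add_self_eq_zero, zero_add]

theorem exists_imageVolume_ne_zero [Nontrivial R] [CharP R 2] {d M : ℕ}
    {z : (Fin d → ℕ) → Fin d → R} (hz : IsSperner (M + 1) z) :
    ∃ p ∈ cube d (M + 1), imageVolume z p ≠ 0 :=
  exists_ne_zero_of_sum_ne_zero ((sum_imageVolume_eq_one hz).trans_ne one_ne_zero)

end Boundary

end KuhnCell

end KuhnTriangulation

section Cube

open Set unitInterval

variable {d : ℕ}

/-- No member of the cover `V` of the cube meets two opposite faces. -/
def SeparatesOppositeFaces (V : Set (Set (Fin d → I))) : Prop :=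
  ∀ v ∈ V, ∀ s ∈ v, ∀ t ∈ v, ∀ i, s i = 0 → t i ≠ 1

/-- The vertex `eᵢ` of the standard simplex, where `t i = 1` is the last of the faces `t j = 1` of
the cube that `v` meets, and the vertex `0` if `v` meets none of them. -/
noncomputable def lastFaceLabel (v : Set (Fin d → I)) : Fin d → ZMod 2 := by
  classical exact fun i ↦ if IsGreatest {j | ∃ t ∈ v, t j = 1} i then 1 else 0

theorem lastFaceLabel_eq_zero {V : Set (Set (Fin d → I))} (hV : SeparatesOppositeFaces V)
    {v : Set (Fin d → I)} (hv : v ∈ V) {s : Fin d → I} (hs : s ∈ v) {i : Fin d} (hi : s i = 0) :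
    lastFaceLabel v i = 0 := by
  refine if_neg fun h ↦ ?_
  obtain ⟨t, ht, hti⟩ := h.1
  exact hV v hv s hs t ht i hi hti

theorem lastFaceLabel_eq_zero_of_lt {v : Set (Fin d → I)} {s : Fin d → I} (hs : s ∈ v)
    {i j : Fin d} (hi : s i = 1) (hj : j < i) : lastFaceLabel v j = 0 :=
  if_neg fun h ↦ (h.2 ⟨s, hs, hi⟩).not_gt hj

theorem sum_lastFaceLabel_eq_one {v : Set (Fin d → I)} {s : Fin d → I} (hs : s ∈ v)
    {i : Fin d} (hi : s i = 1) : ∑ j, lastFaceLabel v j = 1 := by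
  classical
  obtain ⟨m, hm⟩ : ∃ m, IsGreatest {j | ∃ t ∈ v, t j = 1} m :=
    (exists_max_image {j | ∃ t ∈ v, t j = 1} id (toFinite _) ⟨i, s, hs, hi⟩)
  have (j : Fin d) : lastFaceLabel v j = if j = m then 1 else 0 :=
    if_congr ⟨fun hj ↦ hj.unique hm, fun hj ↦ hj ▸ hm⟩ rfl rfl
  simp [this]

/-- The point of the cube with coordinates `x i / N`, clamped to `[0, 1]`. -/
noncomputable def gridPoint (N : ℕ) (x : Fin d → ℕ) : Fin d → I :=
  fun i ↦ projIcc 0 1 zero_le_one (x i / N)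

theorem gridPoint_eq_zero (N : ℕ) {x : Fin d → ℕ} {i : Fin d} (h : x i = 0) :
    gridPoint N x i = 0 := by
  simp [gridPoint, h]

theorem gridPoint_eq_one {N : ℕ} (hN : N ≠ 0) {x : Fin d → ℕ} {i : Fin d} (h : x i = N) :
    gridPoint N x i = 1 := by
  simp [gridPoint, h, hN]

theorem dist_gridPoint_vertex_le (N : ℕ) (p : KuhnCell d) (j : Fin (d + 1)) :
    dist (gridPoint N p.1) (gridPoint N (p.vertex j)) ≤ 1 / N := by
  refine (dist_pi_le_iff (by positivity)).2 fun i ↦ ?_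
  have hstep : |(p.1 i : ℝ) - p.vertex j i| ≤ 1 := by
    unfold KuhnCell.vertex
    split_ifs <;> simp
  calc dist (gridPoint N p.1 i) (gridPoint N (p.vertex j) i)
      ≤ dist ((p.1 i : ℝ) / N) (p.vertex j i / N) := by
        simpa [gridPoint] using (LipschitzWith.projIcc zero_le_one).dist_le_mul _ _
    _ = |(p.1 i : ℝ) - p.vertex j i| / N := by
        rw [Real.dist_eq, ← sub_div, abs_div, Nat.abs_cast]
    _ ≤ 1 / N := by gcongr

theorem isSperner_lastFaceLabel {V : Set (Set (Fin d → I))} (hV : SeparatesOppositeFaces V)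
    {c : (Fin d → I) → Set (Fin d → I)} (hcV : ∀ s, c s ∈ V) (hc : ∀ s, s ∈ c s) {N : ℕ}
    (hN : N ≠ 0) : KuhnCell.IsSperner N fun x ↦ lastFaceLabel (c (gridPoint N x)) where
  eq_zero_of_eq_zero _ _ hx := lastFaceLabel_eq_zero hV (hcV _) (hc _) (gridPoint_eq_zero N hx)
  eq_zero_of_lt _ _ _ hx hj := lastFaceLabel_eq_zero_of_lt (hc _) (gridPoint_eq_one hN hx) hj
  sum_eq_one _ _ hx := sum_lastFaceLabel_eq_one (hc _) (gridPoint_eq_one hN hx)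

theorem exists_add_one_le_encard_of_separatesOppositeFaces {V : Set (Set (Fin d → I))}
    (hVo : ∀ v ∈ V, IsOpen v) (hVc : ⋃₀ V = univ) (hV : SeparatesOppositeFaces V) :
    ∃ x, (d : ℕ∞) + 1 ≤ {v ∈ V | x ∈ v}.encard := by
  obtain ⟨δ, hδ, hball⟩ := lebesgue_number_lemma_of_metric_sUnion isCompact_univ hVo hVc.ge
  choose c hcV hc using fun x : Fin d → I ↦ hball x (mem_univ x)
  obtain ⟨M, hM⟩ := exists_nat_one_div_lt hδ
  obtain ⟨p, -, hp⟩ := KuhnCell.exists_imageVolume_ne_zero <|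
    isSperner_lastFaceLabel hV hcV (fun s ↦ hc s (Metric.mem_ball_self hδ)) M.succ_ne_zero
  let w (j : Fin (d + 1)) : Set (Fin d → I) := c (gridPoint (M + 1) (p.vertex j))
  have hw_injective : Function.Injective w :=
    (KuhnCell.injective_vertex_of_imageVolume_ne_zero hp).of_comp (f := lastFaceLabel)
  have hw_mem (j : Fin (d + 1)) : gridPoint (M + 1) p.1 ∈ w j :=
    hc _ ((dist_gridPoint_vertex_le _ p j).trans_lt (by exact_mod_cast hM))
  refine ⟨gridPoint (M + 1) p.1, ?_⟩
  calc (d : ℕ∞) + 1 = (range w).encard := by simp [← image_univ, hw_injective.encard_image]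
    _ ≤ {v ∈ V | gridPoint (M + 1) p.1 ∈ v}.encard :=
      encard_le_encard (range_subset_iff.2 fun j ↦ ⟨hcV _, hw_mem j⟩)

theorem le_of_covDimLE_cube {k : ℕ} (h : CovDimLE (Fin d → I) k) : d ≤ k := by
  obtain ⟨V, hVo, hVc, hVr, hVk⟩ := h (range fun p ↦ Metric.ball p (1 / 2))
    (forall_mem_range.2 fun p ↦ Metric.isOpen_ball)
    (eq_univ_of_forall fun p ↦ ⟨_, mem_range_self p, Metric.mem_ball_self (by norm_num)⟩)
  have hV : SeparatesOppositeFaces V := by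
    intro v hv s hs t ht i hsi hti
    obtain ⟨_, ⟨p, rfl⟩, hvp⟩ := hVr v hv
    have hst : dist s t < 1 := by
      have := dist_triangle_right s t p
      have := Metric.mem_ball.1 (hvp hs)
      have := Metric.mem_ball.1 (hvp ht)
      linarith
    have := (dist_le_pi_dist s t i).trans_lt hst
    simp [hsi, hti, Subtype.dist_eq] at this
  obtain ⟨x, hx⟩ := exists_add_one_le_encard_of_separatesOppositeFaces hVo hVc hV
  have : d + 1 ≤ k + 1 := by exact_mod_cast hx.trans (hVk x)
  exact Nat.le_of_succ_le_succ this

end Cube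

section Embedding

open Set Topology unitInterval

variable {X Y : Type*} [TopologicalSpace X] [TopologicalSpace Y]

theorem CovDimLE.of_isClosedEmbedding {k : ℕ} {g : Y → X} (hg : IsClosedEmbedding g)
    (hX : CovDimLE X k) : CovDimLE Y k := by
  intro U hUo hUc
  obtain ⟨V, hVo, hVc, hVr, hVk⟩ :=
    hX {O | IsOpen O ∧ (g ⁻¹' O ∈ U ∨ O = (range g)ᶜ)} (fun O hO ↦ hO.1) <| by
      refine eq_univ_of_forall fun x ↦ ?_
      by_cases hx : x ∈ range g
      · obtain ⟨y, rfl⟩ := hx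
        obtain ⟨u, hu, hy⟩ := sUnion_eq_univ_iff.1 hUc y
        obtain ⟨O, hO, rfl⟩ := hg.isInducing.isOpen_iff.1 (hUo u hu)
        exact ⟨O, ⟨hO, Or.inl hu⟩, hy⟩
      · exact ⟨_, ⟨hg.isClosed_range.isOpen_compl, Or.inr rfl⟩, hx⟩
  refine ⟨{w | ∃ v ∈ V, g ⁻¹' v = w ∧ w.Nonempty}, ?_, ?_, ?_, fun y ↦ ?_⟩
  · rintro _ ⟨v, hv, rfl, -⟩
    exact (hVo v hv).preimage hg.continuous
  · refine eq_univ_of_forall fun y ↦ ?_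
    obtain ⟨v, hv, hy⟩ := sUnion_eq_univ_iff.1 hVc (g y)
    exact ⟨_, ⟨v, hv, rfl, y, hy⟩, hy⟩
  · rintro _ ⟨v, hv, rfl, y, hy⟩
    obtain ⟨O, ⟨-, hO | rfl⟩, hvO⟩ := hVr v hv
    · exact ⟨_, hO, preimage_mono hvO⟩
    · exact absurd (mem_range_self y) (hvO hy)
  · calc {w ∈ {w | ∃ v ∈ V, g ⁻¹' v = w ∧ w.Nonempty} | y ∈ w}.encard
        ≤ (preimage g '' {v ∈ V | g y ∈ v}).encard := by
          refine encard_le_encard ?_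
          rintro _ ⟨⟨v, hv, rfl, -⟩, hy⟩
          exact mem_image_of_mem _ ⟨hv, hy⟩
      _ ≤ {v ∈ V | g y ∈ v}.encard := encard_image_le _ _
      _ ≤ (k : ℕ∞) + 1 := hVk (g y)

theorem CovDimLE.le_of_injective [T2Space X] {d k : ℕ} {g : (Fin d → I) → X}
    (hgc : Continuous g) (hgi : Function.Injective g) (hX : CovDimLE X k) : d ≤ k :=
  le_of_covDimLE_cube (hX.of_isClosedEmbedding (hgc.isClosedEmbedding hgi))

end Embedding

section Dyadic

open Set Topology

variable {X ι : Type*} [TopologicalSpace X]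

theorem covDimLE_of_disjoint_refinements {n : ℕ}
    (h : ∀ U : Set (Set X), (∀ u ∈ U, IsOpen u) → ⋃₀ U = univ →
      ∃ W : Fin (n + 1) → Set (Set X), (∀ k, ∀ w ∈ W k, IsOpen w) ∧ ⋃₀ (⋃ k, W k) = univ ∧
        (∀ k, ∀ w ∈ W k, ∃ u ∈ U, w ⊆ u) ∧ ∀ k, (W k).PairwiseDisjoint id) :
    CovDimLE X n := by
  intro U hUo hUc
  obtain ⟨W, hWo, hWc, hWr, hWd⟩ := h U hUo hUc
  refine ⟨⋃ k, W k, fun v hv ↦ ?_, hWc, fun v hv ↦ ?_, fun x ↦ ?_⟩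
  · obtain ⟨k, hk⟩ := mem_iUnion.1 hv
    exact hWo k v hk
  · obtain ⟨k, hk⟩ := mem_iUnion.1 hv
    exact hWr k v hk
  · have index (v : {v ∈ ⋃ k, W k | x ∈ v}) : ∃ k, v.1 ∈ W k := mem_iUnion.1 v.2.1
    choose k hk using index
    have k_injective : Function.Injective k := fun v w hvw ↦
      Subtype.ext ((hWd (k v)).elim_set (hk v) (hvw ▸ hk w) x v.2.2 w.2.2)
    calc {v ∈ ⋃ k, W k | x ∈ v}.encard
        ≤ ENat.card (Fin (n + 1)) := ENat.card_le_card_of_injective k_injective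
      _ = (n : ℕ∞) + 1 := by simp

theorem exists_disjoint_refinement_of_nested {cell : ℕ → X → Set X}
    (hcell_open : ∀ m x, IsOpen (cell m x)) (hcell_anti : ∀ x, Antitone fun m ↦ cell m x)
    (hcell_eq : ∀ m x, ∀ y ∈ cell m x, cell m y = cell m x) (U : Set (Set X)) :
    ∃ W : Set (Set X), (∀ w ∈ W, IsOpen w) ∧ (∀ w ∈ W, ∃ u ∈ U, w ⊆ u) ∧
      W.PairwiseDisjoint id ∧
      ∀ x, (∀ m, x ∈ cell m x) → (∃ m, ∃ u ∈ U, cell m x ⊆ u) → x ∈ ⋃₀ W := by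
  classical
  have cell_eq_of_le {l m : ℕ} {x y q : X} (hl : ∃ u ∈ U, cell l x ⊆ u)
      (hm : IsLeast {l | ∃ u ∈ U, cell l y ⊆ u} m) (hqx : q ∈ cell l x) (hqy : q ∈ cell m y)
      (hlm : l ≤ m) : cell l x = cell m y := by
    have hxy : cell l x = cell l y :=
      (hcell_eq l x q hqx).symm.trans (hcell_eq l y q (hcell_anti y hlm hqy))
    rw [hxy] at hl ⊢
    rw [hlm.antisymm (hm.2 hl)]
  refine ⟨{w | ∃ x m, w = cell m x ∧ IsLeast {l | ∃ u ∈ U, cell l x ⊆ u} m}, ?_, ?_, ?_, ?_⟩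
  · rintro _ ⟨x, m, rfl, -⟩
    exact hcell_open m x
  · rintro _ ⟨x, m, rfl, hm⟩
    exact hm.1
  · rintro _ ⟨x, l, rfl, hl⟩ _ ⟨y, m, rfl, hm⟩ hne
    refine disjoint_left.2 fun q hqx hqy ↦ hne ?_
    obtain hlm | hml := le_total l m
    · exact cell_eq_of_le hl.1 hm hqx hqy hlm
    · exact (cell_eq_of_le hm.1 hl hqy hqx hml).symm
  · intro x hx hex
    exact ⟨_, ⟨x, _, rfl, Nat.isLeast_find hex⟩, hx _⟩

/-- The interior of the dyadic interval `[c / 2ᵐ, (c + 1) / 2ᵐ)` that contains `a`; it contains `a`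
itself unless `a = c / 2ᵐ`. -/
def dyadicInterval (m : ℕ) (a : ℝ) : Set ℝ :=
  {b | 2 ^ m * b ∈ Ioo (⌊2 ^ m * a⌋ : ℝ) (⌊2 ^ m * a⌋ + 1)}

theorem isOpen_dyadicInterval (m : ℕ) (a : ℝ) : IsOpen (dyadicInterval m a) :=
  isOpen_Ioo.preimage (continuous_const_mul _)

theorem dyadicInterval_eq_of_mem {m : ℕ} {a b : ℝ} (hb : b ∈ dyadicInterval m a) :
    dyadicInterval m b = dyadicInterval m a := by
  have : ⌊2 ^ m * b⌋ = ⌊2 ^ m * a⌋ := Int.floor_eq_iff.2 ⟨hb.1.le, hb.2⟩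
  simp only [dyadicInterval, this]

theorem antitone_dyadicInterval (a : ℝ) : Antitone fun m ↦ dyadicInterval m a := by
  refine antitone_nat_of_succ_le fun m b hb ↦ ?_
  have lower : 2 * ⌊2 ^ m * a⌋ ≤ ⌊2 ^ (m + 1) * a⌋ := by
    rw [Int.le_floor, pow_succ]
    push_cast
    linarith [Int.floor_le (2 ^ m * a)]
  have upper : ⌊2 ^ (m + 1) * a⌋ + 1 ≤ 2 * (⌊2 ^ m * a⌋ + 1) := by
    rw [Int.add_one_le_iff, Int.floor_lt, pow_succ]
    push_cast
    linarith [Int.lt_floor_add_one (2 ^ m * a)]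
  rify at lower upper
  obtain ⟨hb_lower, hb_upper⟩ := hb
  rw [pow_succ] at lower upper hb_lower hb_upper
  constructor <;> linarith

theorem mem_dyadicInterval_self (m : ℕ) {a : ℝ} (ha : Irrational a) : a ∈ dyadicInterval m a := by
  have hirr : Irrational (2 ^ m * a) := by
    exact_mod_cast ha.natCast_mul (pow_ne_zero m two_ne_zero)
  exact ⟨(Int.floor_le _).lt_of_ne (hirr.ne_int _).symm, Int.lt_floor_add_one _⟩

theorem abs_sub_lt_of_mem_dyadicInterval {m : ℕ} {a b : ℝ} (hb : b ∈ dyadicInterval m a) :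
    |b - a| < (1 / 2) ^ m := by
  have h : |2 ^ m * b - 2 ^ m * a| < 1 :=
    Int.abs_sub_lt_one_of_floor_eq_floor (Int.floor_eq_iff.2 ⟨hb.1.le, hb.2⟩)
  rw [← mul_sub, abs_mul, abs_of_pos (by positivity)] at h
  rwa [one_div_pow, lt_div_iff₀' (by positivity)]

theorem exists_disjoint_refinement_of_isInducing [Finite ι] {g : X → ι → ℝ} (hg : IsInducing g)
    {U : Set (Set X)} (hUo : ∀ u ∈ U, IsOpen u) (hUc : ⋃₀ U = univ) :
    ∃ W : Set (Set X), (∀ w ∈ W, IsOpen w) ∧ (∀ w ∈ W, ∃ u ∈ U, w ⊆ u) ∧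
      W.PairwiseDisjoint id ∧ ∀ x, (∀ i, Irrational (g x i)) → x ∈ ⋃₀ W := by
  have := Fintype.ofFinite ι
  let cell (m : ℕ) (x : X) : Set X := g ⁻¹' univ.pi fun i ↦ dyadicInterval m (g x i)
  obtain ⟨W, hWo, hWr, hWd, hWc⟩ := exists_disjoint_refinement_of_nested (cell := cell)
    (fun m x ↦ (isOpen_set_pi finite_univ fun i _ ↦ isOpen_dyadicInterval m _).preimage
      hg.continuous)
    (fun x l m hlm ↦ preimage_mono <| pi_mono fun i _ ↦ antitone_dyadicInterval _ hlm)
    (fun m x y hy ↦ congrArg (preimage g) <| pi_congr rfl fun i hi ↦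
      dyadicInterval_eq_of_mem (hy i hi)) U
  refine ⟨W, hWo, hWr, hWd, fun x hx ↦ hWc x (fun m i _ ↦ mem_dyadicInterval_self m (hx i)) ?_⟩
  obtain ⟨u, hu, hxu⟩ := sUnion_eq_univ_iff.1 hUc x
  obtain ⟨O, hO, rfl⟩ := hg.isOpen_iff.1 (hUo u hu)
  obtain ⟨ε, hε, hball⟩ := Metric.isOpen_iff.1 hO (g x) hxu
  obtain ⟨m, hm⟩ := exists_pow_lt_of_lt_one hε one_half_lt_one
  refine ⟨m, _, hu, preimage_mono fun y hy ↦ hball ?_⟩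
  exact (dist_pi_lt_iff hε).2 fun i ↦
    (abs_sub_lt_of_mem_dyadicInterval (hy i (mem_univ i))).trans hm

theorem exists_forall_irrational_sub_mul_sqrt_two [Fintype ι] (a : ι → ℝ) :
    ∃ k : Fin (Fintype.card ι + 1), ∀ i, Irrational (a i - k * √2) := by
  by_contra! h
  choose i hi using h
  obtain ⟨k, l, hkl, hil⟩ := Fintype.exists_ne_map_eq_of_card_lt i (by simp)
  have hirr : Irrational ((l - k : ℤ) * √2) :=
    irrational_sqrt_two.intCast_mul (sub_ne_zero.2 (by simpa [Fin.ext_iff] using hkl.symm))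
  have hdiff : (l - k : ℤ) * √2 = a (i k) - k * √2 - (a (i l) - l * √2) := by
    rw [hil]
    push_cast
    ring
  rw [hdiff, sub_eq_add_neg] at hirr
  exact hirr.add_cases.elim (hi k) fun h ↦ hi l h.of_neg

theorem covDimLE_card_of_isInducing [Fintype ι] {f : X → ι → ℝ} (hf : IsInducing f) :
    CovDimLE X (Fintype.card ι) := by
  refine covDimLE_of_disjoint_refinements fun U hUo hUc ↦ ?_
  have shift_isInducing (k : Fin (Fintype.card ι + 1)) :
      IsInducing fun x i ↦ f x i - k * √2 :=
    (Homeomorph.subRight fun _ : ι ↦ (k : ℝ) * √2).isInducing.comp hf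
  choose W hWo hWr hWd hWc using fun k ↦
    exists_disjoint_refinement_of_isInducing (shift_isInducing k) hUo hUc
  refine ⟨W, hWo, eq_univ_of_forall fun x ↦ ?_, hWr, hWd⟩
  obtain ⟨k, hk⟩ := exists_forall_irrational_sub_mul_sqrt_two (f x)
  exact sUnion_mono (subset_iUnion W k) (hWc k x hk)

end Dyadic

section FiniteDimensional

open Set Topology unitInterval Module

variable {X E : Type*} [TopologicalSpace X]

theorem covDim_eq_of_forall_le {n : ℕ} (hn : CovDimLE X n) (hle : ∀ k, CovDimLE X k → n ≤ k) :
    covDim X = n := by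
  refine le_antisymm (sInf_le ⟨n, rfl, hn⟩) (le_sInf ?_)
  rintro _ ⟨k, rfl, hk⟩
  exact_mod_cast hle k hk

theorem exists_continuous_injective_cube_of_isEmbedding {d : ℕ} {f : X → Fin d → ℝ}
    (hf : IsEmbedding f) (hint : (interior (range f)).Nonempty) :
    ∃ g : (Fin d → I) → X, Continuous g ∧ Function.Injective g := by
  obtain ⟨c, hc⟩ := hint
  obtain ⟨ε, hε, hball⟩ := Metric.nhds_basis_closedBall.mem_iff.1 (mem_interior_iff_mem_nhds.1 hc)
  let line (t : Fin d → I) : Fin d → ℝ := fun i ↦ c i + ε * t i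
  have hline (t : Fin d → I) : line t ∈ range f := by
    refine hball ((dist_pi_le_iff hε.le).2 fun i ↦ ?_)
    have : |(t i : ℝ)| ≤ 1 := by rw [abs_of_nonneg (t i).2.1]; exact (t i).2.2
    simpa [line, Real.dist_eq, abs_mul, abs_of_pos hε] using mul_le_of_le_one_right hε.le this
  choose g hg using hline
  refine ⟨g, ?_, ?_⟩
  · rw [hf.continuous_iff, show f ∘ g = line from funext hg]
    fun_prop
  · intro s t hst
    funext i
    have := congrFun ((hg s).symm.trans ((congrArg f hst).trans (hg t))) i
    simpa [line, hε.ne', Subtype.ext_iff] using this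

theorem covDim_eq_of_isEmbedding_pi {d : ℕ} {f : X → Fin d → ℝ} (hf : IsEmbedding f)
    (hint : (interior (range f)).Nonempty) : covDim X = d := by
  have : T2Space X := hf.t2Space
  refine covDim_eq_of_forall_le ?_ fun k hk ↦ ?_
  · simpa using covDimLE_card_of_isInducing hf.isInducing
  · obtain ⟨g, hgc, hgi⟩ := exists_continuous_injective_cube_of_isEmbedding hf hint
    exact hk.le_of_injective hgc hgi

theorem covDim_eq_finrank_of_isEmbedding [AddCommGroup E] [Module ℝ E] [TopologicalSpace E]
    [IsTopologicalAddGroup E] [ContinuousSMul ℝ E] [T2Space E] [FiniteDimensional ℝ E]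
    {f : X → E} (hf : IsEmbedding f) (hint : (interior (range f)).Nonempty) :
    covDim X = finrank ℝ E := by
  let e := (finBasis ℝ E).equivFunL.toHomeomorph
  refine covDim_eq_of_isEmbedding_pi (e.isEmbedding.comp hf) ?_
  rw [range_comp, ← e.image_interior]
  exact hint.image e

end FiniteDimensional

section RnSimplex

open Set Topology Module

theorem nonempty_interior_rnSet (n : ℕ) : (interior (RnSet n)).Nonempty := by
  have hsub : univ.pi (fun _ ↦ Ioo 1 2) ⊆ RnSet n := by
    intro r hr
    refine ⟨fun e ↦ one_pos.trans (hr e (mem_univ e)).1, fun i j k hij hjk hik ↦ ?_⟩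
    have := (hr (pairOf i k hik) (mem_univ _)).2
    have := (hr (pairOf i j hij) (mem_univ _)).1
    have := (hr (pairOf j k hjk) (mem_univ _)).1
    linarith
  exact ⟨fun _ ↦ 3 / 2, interior_maximal hsub (isOpen_set_pi finite_univ fun _ _ ↦ isOpen_Ioo)
    fun _ _ ↦ by norm_num⟩

theorem image_tail_simplexSet (m : ℕ) :
    Fin.tail '' SimplexSet (m + 1) = {t : Fin m → ℝ | (∀ i, 0 < t i) ∧ ∑ i, t i < 1} := by
  ext t
  constructor
  · rintro ⟨s, ⟨hpos, hsum⟩, rfl⟩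
    rw [Fin.sum_univ_succ] at hsum
    exact ⟨fun i ↦ hpos i.succ, (lt_add_of_pos_left _ (hpos 0)).trans_eq hsum⟩
  · rintro ⟨hpos, hsum⟩
    refine ⟨Fin.cons (1 - ∑ i, t i) t, ⟨?_, ?_⟩, Fin.tail_cons _ _⟩
    · simpa [Fin.forall_fin_succ] using ⟨hsum, hpos⟩
    · simp [Fin.sum_univ_succ]

theorem nonempty_interior_image_tail_simplexSet (m : ℕ) :
    (interior ((Fin.tail : (Fin (m + 1) → ℝ) → Fin m → ℝ) '' SimplexSet (m + 1))).Nonempty := by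
  have hopen : IsOpen {t : Fin m → ℝ | (∀ i, 0 < t i) ∧ ∑ i, t i < 1} := by
    rw [ofPred_and, ofPred_forall]
    exact (isOpen_iInter_of_finite fun i ↦ isOpen_lt continuous_const (continuous_apply i)).inter
      (isOpen_lt (by fun_prop) continuous_const)
  rw [image_tail_simplexSet, hopen.interior_eq]
  refine ⟨fun _ ↦ 1 / (m + 1), fun _ ↦ by positivity, ?_⟩
  rw [Finset.sum_const, Finset.card_univ, Fintype.card_fin, nsmul_eq_mul, mul_one_div,
    div_lt_one (by positivity)]
  exact lt_add_one _

/-- The chart of `R_{m+1} × int Δ_m` that drops the barycentric coordinate with index `0`. -/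
def tailChart (m : ℕ) (p : ↥(RnSet (m + 1) ×ˢ SimplexSet (m + 1))) :
    (Pairs (m + 1) → ℝ) × (Fin m → ℝ) :=
  Prod.map id Fin.tail p.1

theorem range_tailChart (m : ℕ) :
    range (tailChart m) = RnSet (m + 1) ×ˢ (Fin.tail '' SimplexSet (m + 1)) := by
  have : tailChart m = Prod.map id Fin.tail ∘ Subtype.val := rfl
  rw [this, range_comp, Subtype.range_coe, prodMap_image_prod, image_id]

theorem isEmbedding_tailChart (m : ℕ) : IsEmbedding (tailChart m) := by
  let chartInv : (Pairs (m + 1) → ℝ) × (Fin m → ℝ) → (Pairs (m + 1) → ℝ) × (Fin (m + 1) → ℝ) :=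
    Prod.map id fun t ↦ Fin.cons (1 - ∑ i, t i) t
  have hinv : chartInv ∘ tailChart m = Subtype.val := by
    funext ⟨⟨r, s⟩, hr, hs⟩
    have h0 : 1 - ∑ i, Fin.tail s i = s 0 := by
      rw [← hs.2, Fin.sum_univ_succ]
      exact add_sub_cancel_right _ _
    simp only [chartInv, tailChart, Function.comp_apply, Prod.map, id, h0, Fin.cons_self_tail]
  refine IsEmbedding.of_comp ?_ ?_ (hinv ▸ IsEmbedding.subtypeVal)
  · unfold tailChart Fin.tail; fun_prop
  · fun_prop

theorem card_pairs_succ_add (m : ℕ) :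
    Fintype.card (Pairs (m + 1)) + m = (m + 1 + 2) * m / 2 := by
  have : Fintype.card (Pairs (m + 1)) = (m + 1) * m / 2 := by
    rw [Fintype.card_finset_len, Fintype.card_fin, Nat.choose_two_right, Nat.add_sub_cancel]
  rw [this, ← Nat.add_mul_div_right _ _ two_pos]
  ring_nf

end RnSimplex

theorem stmt9 (n : ℕ) (hn : 1 ≤ n) :
    covDim ↥(RnSet n ×ˢ SimplexSet n) = (↑((n + 2) * (n - 1) / 2) : ℕ∞) := by
  obtain ⟨m, rfl⟩ := Nat.exists_eq_add_of_le' hn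
  have hint : (interior (Set.range (tailChart m))).Nonempty := by
    rw [range_tailChart, interior_prod_eq]
    exact (nonempty_interior_rnSet _).prod (nonempty_interior_image_tail_simplexSet m)
  rw [covDim_eq_finrank_of_isEmbedding (isEmbedding_tailChart m) hint, Module.finrank_prod,
    Module.finrank_fintype_fun_eq_card, Module.finrank_fin_fun, card_pairs_succ_add,
    Nat.add_sub_cancel]
end

section
/- If f : X → Y is an open continuous surjection between separable metric spaces such that every fiber f⁻¹(y) is finite, then dim X = dim Y, where dim denotes covering dimension. -/
/-!
If `f` is an open map with discrete fibers, each point `x` has an open neighborhood `U` meeting the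
fiber through `x` only in `x`. The set `N` of those `y` whose fiber meets `U` at least twice is
open, and over a closed set `K ⊆ f(U) \ N` the map `f` embeds every closed `L ⊆ U`, with closed
image. Letting `U` run through a countable base and writing open sets as countable unions of closed
sets, one covers `X` by countably many closed sets which `f` embeds as closed subsets of `Y`.
Covering dimension is monotone under closed embeddings and satisfies the countable sum theorem, so
every bound on the dimension of `X` transfers to `Y` along these pieces, and conversely.

For the sum theorem, a locally finite open cover is shrunk successively, the `j`-th time so that its
order along the `j`-th piece becomes at most `n + 1`. As the closure of each shrinking lies in the
previous one, the intersections form a closed cover; it has order at most `n + 1` everywhere, and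
can be swelled to an open cover without increasing the order.
-/

open Set Topology TopologicalSpace

section PreciseRefinement

variable {X : Type*} [TopologicalSpace X] {n : ℕ}

theorem CovDimLE.exists_precise_refinement {ι : Type*} (h : CovDimLE X n) {U : ι → Set X}
    (hUo : ∀ i, IsOpen (U i)) (hUc : ⋃ i, U i = univ) :
    ∃ V : ι → Set X, (∀ i, IsOpen (V i)) ∧ ⋃ i, V i = univ ∧ (∀ i, V i ⊆ U i) ∧
      ∀ x, {i | x ∈ V i}.encard ≤ (n : ℕ∞) + 1 := by
  obtain ⟨V, hVo, hVc, hVU, hVn⟩ := h (range U) (forall_mem_range.2 hUo) hUc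
  have hsub : ∀ v : V, ∃ i, (v : Set X) ⊆ U i := fun v => exists_range_iff.1 (hVU v v.2)
  choose c hc using hsub
  refine ⟨fun i => ⋃ v : V, ⋃ _ : c v = i, v, fun i => ?_, ?_, fun i => ?_, fun x => ?_⟩
  · exact isOpen_iUnion fun v => isOpen_iUnion fun _ => hVo v v.2
  · refine iUnion_eq_univ_iff.2 fun x => ?_
    obtain ⟨v, hv, hxv⟩ := sUnion_eq_univ_iff.1 hVc x
    exact ⟨c ⟨v, hv⟩, mem_iUnion₂.2 ⟨⟨v, hv⟩, rfl, hxv⟩⟩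
  · rintro x hx
    obtain ⟨v, rfl, hxv⟩ := mem_iUnion₂.1 hx
    exact hc v hxv
  · have himage : {i | x ∈ ⋃ v : V, ⋃ _ : c v = i, (v : Set X)} ⊆
        c '' (Subtype.val ⁻¹' {v ∈ V | x ∈ v}) := by
      rintro i hi
      obtain ⟨v, hvi, hxv⟩ := mem_iUnion₂.1 hi
      exact ⟨v, ⟨v.2, hxv⟩, hvi⟩
    calc _ ≤ (c '' (Subtype.val ⁻¹' {v ∈ V | x ∈ v})).encard := encard_le_encard himage
      _ ≤ (Subtype.val ⁻¹' {v ∈ V | x ∈ v} : Set V).encard := encard_image_le _ _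
      _ = {v ∈ V | x ∈ v}.encard :=
        encard_preimage_of_injective_subset_range Subtype.val_injective fun v hv => ⟨⟨v, hv.1⟩, rfl⟩
      _ ≤ n + 1 := hVn x

theorem CovDimLE.of_exists_precise_refinement
    (h : ∀ U : Set (Set X), (∀ u ∈ U, IsOpen u) → ⋃₀ U = univ →
      ∃ V : U → Set X, (∀ u, IsOpen (V u)) ∧ ⋃ u, V u = univ ∧ (∀ u, V u ⊆ u) ∧
        ∀ x, {u | x ∈ V u}.encard ≤ (n : ℕ∞) + 1) :
    CovDimLE X n := by
  intro U hUo hUc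
  obtain ⟨V, hVo, hVc, hVU, hVn⟩ := h U hUo hUc
  refine ⟨range V, forall_mem_range.2 hVo, hVc, forall_mem_range.2 fun u => ⟨u, u.2, hVU u⟩,
    fun x => ?_⟩
  have himage : {v ∈ range V | x ∈ v} ⊆ V '' {u | x ∈ V u} := by
    rintro _ ⟨⟨u, rfl⟩, hxu⟩
    exact ⟨u, hxu, rfl⟩
  exact (encard_le_encard himage).trans ((encard_image_le _ _).trans (hVn x))

theorem CovDimLE.of_isEmpty [IsEmpty X] : CovDimLE X n :=
  fun U hUo hUc => ⟨U, hUo, hUc, fun u hu => ⟨u, hu, Subset.rfl⟩, isEmptyElim⟩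

theorem CovDimLE.of_isClosedEmbedding_s10 {A : Type*} [TopologicalSpace A] {g : A → X}
    (hg : IsClosedEmbedding g) (h : CovDimLE X n) : CovDimLE A n := by
  refine .of_exists_precise_refinement fun U hUo hUc => ?_
  have hext : ∀ u : U, ∃ w : Set X, IsOpen w ∧ g ⁻¹' w = u := fun u =>
    hg.isInducing.isOpen_iff.1 (hUo u u.2)
  choose w hwo hw using hext
  have hcover : ⋃ o : Option U, o.elim (range g)ᶜ w = univ := by
    refine iUnion_eq_univ_iff.2 fun x => ?_
    by_cases hx : x ∈ range g
    · obtain ⟨a, rfl⟩ := hx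
      obtain ⟨u, hu, hau⟩ := sUnion_eq_univ_iff.1 hUc a
      exact ⟨some ⟨u, hu⟩, (hw ⟨u, hu⟩).ge hau⟩
    · exact ⟨none, hx⟩
  obtain ⟨V, hVo, hVc, hVU, hVn⟩ := h.exists_precise_refinement
    (Option.forall.2 ⟨hg.isClosed_range.isOpen_compl, hwo⟩) hcover
  refine ⟨fun u => g ⁻¹' V (some u), fun u => (hVo _).preimage hg.continuous, ?_,
    fun u => (preimage_mono (hVU (some u))).trans (hw u).le, fun a => ?_⟩
  · refine iUnion_eq_univ_iff.2 fun a => ?_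
    obtain ⟨_ | u, ha⟩ := iUnion_eq_univ_iff.1 hVc (g a)
    · exact absurd (mem_range_self a) (hVU none ha)
    · exact ⟨u, ha⟩
  · have hmaps : MapsTo some {u | g a ∈ V (some u)} {o | g a ∈ V o} := fun _ hu => hu
    exact (encard_le_encard_of_injOn hmaps (Option.some_injective _).injOn).trans (hVn (g a))

end PreciseRefinement

theorem iUnion_iInter_eq_univ_of_antitone {X I κ : Type*} [Preorder κ] [IsDirectedOrder κ]
    {T : κ → I → Set X} (hT : ∀ i, Antitone fun j => T j i) (hTc : ∀ j, ⋃ i, T j i = univ)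
    {j₀ : κ} (hfin : ∀ x, {i | x ∈ T j₀ i}.Finite) : ⋃ i, ⋂ j, T j i = univ := by
  refine iUnion_eq_univ_iff.2 fun x => ?_
  by_contra! hno
  have hout : ∀ i, ∃ j, x ∉ T j i := fun i => by simpa only [mem_iInter, not_forall] using hno i
  choose m hm using hout
  have : Nonempty κ := ⟨j₀⟩
  obtain ⟨M, hM⟩ := ((hfin x).image m).bddAbove
  obtain ⟨N, hMN, hjN⟩ := exists_ge_ge M j₀
  obtain ⟨i, hi⟩ := iUnion_eq_univ_iff.1 (hTc N) x
  exact hm i (hT i ((hM ⟨i, hT i hjN hi, rfl⟩).trans hMN) hi)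

section Shrinking

variable {X I : Type*} [TopologicalSpace X] {n : ℕ}

/-- A point-finite open cover of `X`, given as an indexed family: the class of covers which can be
shrunk in a normal space, and which is closed under shrinking, so that the process iterates. -/
structure IsPointFiniteOpenCover (U : I → Set X) : Prop where
  isOpen : ∀ i, IsOpen (U i)
  iUnion_eq : ⋃ i, U i = univ
  finite_setOf_mem : ∀ x, {i | x ∈ U i}.Finite

theorem IsPointFiniteOpenCover.exists_shrinking [NormalSpace X] {U : I → Set X}
    (hU : IsPointFiniteOpenCover U) :
    ∃ W : I → Set X, IsPointFiniteOpenCover W ∧ ∀ i, closure (W i) ⊆ U i := by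
  obtain ⟨W, hWc, hWo, hWU⟩ :=
    exists_iUnion_eq_closure_subset hU.isOpen hU.finite_setOf_mem hU.iUnion_eq
  exact ⟨W, ⟨hWo, hWc, fun x => (hU.finite_setOf_mem x).subset fun i hi =>
    hWU i (subset_closure hi)⟩, hWU⟩

theorem exists_isOpen_cover_preimage_eq {A : Type*} [TopologicalSpace A] {g : A → X}
    (hg : IsClosedEmbedding g) {U : I → Set X} (hUo : ∀ i, IsOpen (U i)) (hUc : ⋃ i, U i = univ)
    {V : I → Set A} (hVo : ∀ i, IsOpen (V i)) (hVc : ⋃ i, V i = univ)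
    (hVU : ∀ i, V i ⊆ g ⁻¹' U i) :
    ∃ W : I → Set X, (∀ i, IsOpen (W i)) ∧ ⋃ i, W i = univ ∧ (∀ i, W i ⊆ U i) ∧
      ∀ i, g ⁻¹' W i = V i := by
  have hpre : ∀ i, g ⁻¹' (U i \ g '' (V i)ᶜ) = V i := fun i => by
    rw [preimage_sdiff, preimage_image_eq _ hg.injective, sdiff_compl]
    exact inter_eq_right.2 (hVU i)
  refine ⟨fun i => U i \ g '' (V i)ᶜ,
    fun i => (hUo i).sdiff (hg.isClosedMap _ (hVo i).isClosed_compl), ?_,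
    fun i => sdiff_subset, hpre⟩
  refine iUnion_eq_univ_iff.2 fun x => ?_
  by_cases hx : x ∈ range g
  · obtain ⟨a, rfl⟩ := hx
    obtain ⟨i, hi⟩ := iUnion_eq_univ_iff.1 hVc a
    exact ⟨i, (hpre i).ge hi⟩
  · obtain ⟨i, hi⟩ := iUnion_eq_univ_iff.1 hUc x
    exact ⟨i, hi, fun hxV => hx (image_subset_range _ _ hxV)⟩

theorem IsPointFiniteOpenCover.exists_shrinking_encard_le [NormalSpace X] {A : Type*}
    [TopologicalSpace A] {g : A → X} (hg : IsClosedEmbedding g) (h : CovDimLE A n)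
    {U : I → Set X} (hU : IsPointFiniteOpenCover U) :
    ∃ W : I → Set X, IsPointFiniteOpenCover W ∧ (∀ i, closure (W i) ⊆ U i) ∧
      ∀ a, {i | g a ∈ W i}.encard ≤ (n : ℕ∞) + 1 := by
  obtain ⟨V, hVo, hVc, hVU, hVn⟩ := h.exists_precise_refinement
    (fun i => (hU.isOpen i).preimage hg.continuous)
    (by rw [← preimage_iUnion, hU.iUnion_eq, preimage_univ])
  obtain ⟨U', hU'o, hU'c, hU'U, hU'V⟩ :=
    exists_isOpen_cover_preimage_eq hg hU.isOpen hU.iUnion_eq hVo hVc hVU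
  have hU' : IsPointFiniteOpenCover U' :=
    ⟨hU'o, hU'c, fun x => (hU.finite_setOf_mem x).subset fun i hi => hU'U i hi⟩
  obtain ⟨W, hW, hWU'⟩ := hU'.exists_shrinking
  refine ⟨W, hW, fun i => (hWU' i).trans (hU'U i), fun a => ?_⟩
  have hWV : {i | g a ∈ W i} ⊆ {i | a ∈ V i} := fun i hi =>
    (hU'V i).le (hWU' i (subset_closure hi))
  exact (encard_le_encard hWV).trans (hVn a)

theorem IsPointFiniteOpenCover.exists_seq_shrinking_encard_le [NormalSpace X] {A : ℕ → Type*}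
    [∀ j, TopologicalSpace (A j)] {g : ∀ j, A j → X} (hg : ∀ j, IsClosedEmbedding (g j))
    (h : ∀ j, CovDimLE (A j) n) {U : I → Set X} (hU : IsPointFiniteOpenCover U) :
    ∃ T : ℕ → I → Set X, T 0 = U ∧ (∀ j, IsPointFiniteOpenCover (T j)) ∧
      (∀ j i, closure (T (j + 1) i) ⊆ T j i) ∧
      ∀ j a, {i | g j a ∈ T (j + 1) i}.encard ≤ (n : ℕ∞) + 1 := by
  have hstep : ∀ (j : ℕ) (W : {W : I → Set X // IsPointFiniteOpenCover W}),
      ∃ W' : {W : I → Set X // IsPointFiniteOpenCover W},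
        (∀ i, closure (W'.1 i) ⊆ W.1 i) ∧ ∀ a, {i | g j a ∈ W'.1 i}.encard ≤ (n : ℕ∞) + 1 := by
    intro j W
    obtain ⟨W', hW', hcl, hcard⟩ := W.2.exists_shrinking_encard_le (hg j) (h j)
    exact ⟨⟨W', hW'⟩, hcl, hcard⟩
  choose next hcl hcard using hstep
  let T : ℕ → {W : I → Set X // IsPointFiniteOpenCover W} := fun k => Nat.rec ⟨U, hU⟩ next k
  exact ⟨fun j => (T j).1, rfl, fun j => (T j).2, fun j => hcl j (T j), fun j => hcard j (T j)⟩

theorem IsPointFiniteOpenCover.exists_isClosed_shrinking_encard_le [NormalSpace X] {κ : Type*}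
    [Countable κ] [Nonempty κ] {A : κ → Type*} [∀ k, TopologicalSpace (A k)] {g : ∀ k, A k → X}
    (hg : ∀ k, IsClosedEmbedding (g k)) (h : ∀ k, CovDimLE (A k) n) {U : I → Set X}
    (hU : IsPointFiniteOpenCover U) :
    ∃ V : I → Set X, (∀ i, IsClosed (V i)) ∧ ⋃ i, V i = univ ∧ (∀ i, V i ⊆ U i) ∧
      ∀ k a, {i | g k a ∈ V i}.encard ≤ (n : ℕ∞) + 1 := by
  obtain ⟨e, he⟩ := exists_surjective_nat κ
  obtain ⟨T, rfl, hT, hcl, hcard⟩ :=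
    hU.exists_seq_shrinking_encard_le (fun j => hg (e j)) fun j => h (e j)
  have hanti : ∀ i, Antitone fun j => T j i := fun i =>
    antitone_nat_of_succ_le fun j => subset_closure.trans (hcl j i)
  have hclosed : ∀ i, IsClosed (⋂ j, T j i) := fun i => by
    have hclosure : ⋂ j, T j i = ⋂ j, closure (T (j + 1) i) :=
      Subset.antisymm (iInter_mono' fun j => ⟨j + 1, subset_closure⟩) (iInter_mono fun j => hcl j i)
    rw [hclosure]
    exact isClosed_iInter fun j => isClosed_closure
  refine ⟨fun i => ⋂ j, T j i, hclosed,
    iUnion_iInter_eq_univ_of_antitone hanti (fun j => (hT j).iUnion_eq) (hT 0).finite_setOf_mem,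
    fun i => iInter_subset _ 0, fun k a => ?_⟩
  obtain ⟨j, rfl⟩ := he k
  have hsub : {i | g (e j) a ∈ ⋂ j, T j i} ⊆ {i | g (e j) a ∈ T (j + 1) i} := fun i hi =>
    mem_iInter.1 hi (j + 1)
  exact (encard_le_encard hsub).trans (hcard j a)

end Shrinking

section CountableSum

variable {X : Type*} [TopologicalSpace X] [NormalSpace X] [ParacompactSpace X]

theorem exists_isOpen_swelling {ι : Type*} {V : ι → Set X} (hV : ∀ i, IsClosed (V i))
    (hlf : LocallyFinite V) :
    ∃ W : ι → Set X, (∀ i, IsOpen (W i)) ∧ (∀ i, V i ⊆ W i) ∧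
      ∀ y, ∃ x, {i | y ∈ W i} ⊆ {i | x ∈ V i} := by
  -- `O x` meets only those `V i` which contain `x`. Remove from the whole space the members of a
  -- locally finite closed refinement of `O` which miss `V i`: this leaves `W i`.
  let O : X → Set X := fun x => ⋂ (i) (_ : x ∉ V i), (V i)ᶜ
  obtain ⟨Q, hQo, hQc, hQlf, hQO⟩ := precise_refinement (fun x => interior (O x))
    (fun x => isOpen_interior) (iUnion_eq_univ_iff.2 fun x =>
      ⟨x, mem_interior_iff_mem_nhds.2 (hlf.iInter_compl_mem_nhds hV x)⟩)
  obtain ⟨C, hCc, hC, hCQ⟩ := exists_iUnion_eq_closed_subset hQo hQlf.point_finite hQc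
  have hCO : ∀ x, C x ⊆ O x := fun x => (hCQ x).trans ((hQO x).trans interior_subset)
  have hClf : LocallyFinite C := hQlf.subset hCQ
  refine ⟨fun i => (⋃ x : {x // Disjoint (V i) (C x)}, C x)ᶜ, fun i => ?_, fun i => ?_,
    fun y => ?_⟩
  · exact ((hClf.comp_injective Subtype.val_injective).isClosed_iUnion
      fun x => hC x.1).isOpen_compl
  · exact subset_compl_iff_disjoint_right.2 (disjoint_iUnion_right.2 fun x => x.2)
  · obtain ⟨x, hyx⟩ := iUnion_eq_univ_iff.1 hCc y
    refine ⟨x, fun i hi => ?_⟩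
    have hmeet : ¬Disjoint (V i) (C x) := fun hd => hi (mem_iUnion.2 ⟨⟨x, hd⟩, hyx⟩)
    obtain ⟨z, hzV, hzC⟩ := not_disjoint_iff.1 hmeet
    by_contra hx
    exact mem_iInter₂.1 (hCO x hzC) i hx hzV

theorem CovDimLE.of_countable_isClosedEmbedding {κ : Type*} [Countable κ] {A : κ → Type*}
    [∀ k, TopologicalSpace (A k)] {n : ℕ} {g : ∀ k, A k → X}
    (hg : ∀ k, IsClosedEmbedding (g k)) (hcover : ⋃ k, range (g k) = univ)
    (h : ∀ k, CovDimLE (A k) n) : CovDimLE X n := by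
  cases isEmpty_or_nonempty X
  · exact .of_isEmpty
  have : Nonempty κ := (iUnion_eq_univ_iff.1 hcover (Classical.arbitrary X)).nonempty
  refine .of_exists_precise_refinement fun U hUo hUc => ?_
  obtain ⟨U₀, hU₀o, hU₀c, hU₀lf, hU₀U⟩ := precise_refinement (fun u : U => (u : Set X))
    (fun u => hUo u u.2) (by rw [← sUnion_eq_iUnion, hUc])
  have hU₀ : IsPointFiniteOpenCover U₀ := ⟨hU₀o, hU₀c, hU₀lf.point_finite⟩
  obtain ⟨V, hV, hVc, hVU₀, hVn⟩ := hU₀.exists_isClosed_shrinking_encard_le hg h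
  obtain ⟨W, hWo, hVW, hW⟩ := exists_isOpen_swelling hV (hU₀lf.subset hVU₀)
  refine ⟨fun u => W u ∩ u, fun u => (hWo u).inter (hUo u u.2), ?_, fun u => inter_subset_right,
    fun y => ?_⟩
  · exact univ_subset_iff.1 (hVc.ge.trans
      (iUnion_mono fun u => subset_inter (hVW u) ((hVU₀ u).trans (hU₀U u))))
  · obtain ⟨x, hyx⟩ := hW y
    obtain ⟨k, a, rfl⟩ := iUnion_eq_univ_iff.1 hcover x
    exact (encard_le_encard fun u hu => hyx hu.1).trans (hVn k a)

end CountableSum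

theorem image_eq_sdiff_image_sdiff {X Y : Type*} {f : X → Y} {U C : Set X} {K : Set Y}
    (hKU : K ⊆ f '' U) (hinj : InjOn f (U ∩ f ⁻¹' K)) (hC : C ⊆ U ∩ f ⁻¹' K) :
    f '' C = K \ f '' (U \ C) := by
  ext y
  constructor
  · rintro ⟨a, ha, rfl⟩
    refine ⟨(hC ha).2, ?_⟩
    rintro ⟨b, ⟨hbU, hbC⟩, hba⟩
    have hbK : f b ∈ K := hba ▸ (hC ha).2
    exact hbC (hinj ⟨hbU, hbK⟩ (hC ha) hba ▸ ha)
  · rintro ⟨hyK, hy⟩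
    obtain ⟨a, haU, rfl⟩ := hKU hyK
    by_contra haC
    exact hy ⟨a, ⟨haU, fun ha => haC ⟨a, ha, rfl⟩⟩, rfl⟩

section OpenMap

variable {X Y : Type*} [TopologicalSpace X] [TopologicalSpace Y] {f : X → Y}

theorem exists_iUnion_isClosed_eq_of_isOpen [PerfectlyNormalSpace X] {U : Set X}
    (hU : IsOpen U) : ∃ F : ℕ → Set X, (∀ m, IsClosed (F m)) ∧ ⋃ m, F m = U := by
  obtain ⟨G, hG, hUG⟩ := isGδ_iff_eq_iInter_nat.1 hU.isClosed_compl.isGδ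
  refine ⟨fun m => (G m)ᶜ, fun m => (hG m).isClosed_compl, ?_⟩
  rw [← compl_iInter, ← hUG, compl_compl]

theorem isOpen_setOf_nontrivial_inter_fiber [T2Space X] (ho : IsOpenMap f) {U : Set X}
    (hU : IsOpen U) : IsOpen {y | (U ∩ f ⁻¹' {y}).Nontrivial} := by
  refine isOpen_iff_mem_nhds.2 ?_
  rintro y ⟨x, ⟨hxU, rfl⟩, x', ⟨hxU', hx'⟩, hne⟩
  obtain ⟨P, Q, hP, hQ, hxP, hxQ, hPQ⟩ := t2_separation hne
  have hfP : f '' (U ∩ P) ∈ 𝓝 (f x) := (ho _ (hU.inter hP)).mem_nhds ⟨x, ⟨hxU, hxP⟩, rfl⟩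
  have hfQ : f '' (U ∩ Q) ∈ 𝓝 (f x) := (ho _ (hU.inter hQ)).mem_nhds ⟨x', ⟨hxU', hxQ⟩, hx'⟩
  filter_upwards [hfP, hfQ]
  rintro z ⟨a, ⟨haU, haP⟩, ha⟩ ⟨b, ⟨hbU, hbQ⟩, hb⟩
  exact ⟨a, ⟨haU, ha⟩, b, ⟨hbU, hb⟩, hPQ.ne_of_mem haP hbQ⟩

theorem isClosedEmbedding_domRestrict_of_isOpenMap (ho : IsOpenMap f) (hf : Continuous f)
    {U L : Set X} {K : Set Y} (hU : IsOpen U) (hL : IsClosed L) (hLU : L ⊆ U) (hK : IsClosed K)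
    (hKU : K ⊆ f '' U) (hinj : InjOn f (U ∩ f ⁻¹' K)) :
    IsClosedEmbedding ((L ∩ f ⁻¹' K).domRestrict f) := by
  have hsub : L ∩ f ⁻¹' K ⊆ U ∩ f ⁻¹' K := inter_subset_inter_left _ hLU
  refine .of_continuous_injective_isClosedMap hf.continuousOn.domRestrict
    (injOn_iff_injective.1 (hinj.mono hsub)) fun C hC => ?_
  have hC' : IsClosed (Subtype.val '' C) :=
    (hL.inter (hK.preimage hf)).isClosedEmbedding_subtypeVal.isClosedMap C hC
  have himage : (L ∩ f ⁻¹' K).domRestrict f '' C = K \ f '' (U \ Subtype.val '' C) := by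
    rw [domRestrict_eq, image_comp]
    exact image_eq_sdiff_image_sdiff hKU hinj ((Subtype.coe_image_subset _ C).trans hsub)
  rw [himage]
  exact hK.sdiff (ho _ (hU.sdiff hC'))

theorem exists_countable_isClosedEmbedding_cover [T2Space X] [SecondCountableTopology X]
    [PerfectlyNormalSpace X] [PerfectlyNormalSpace Y] (ho : IsOpenMap f) (hf : Continuous f)
    (hfib : ∀ y, IsDiscrete (f ⁻¹' {y})) :
    ∃ 𝒟 : Set (Set X), 𝒟.Countable ∧ ⋃₀ 𝒟 = univ ∧
      ∀ D ∈ 𝒟, IsClosed D ∧ IsClosedEmbedding (D.domRestrict f) := by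
  let N : Set X → Set Y := fun U => {y | (U ∩ f ⁻¹' {y}).Nontrivial}
  have hL : ∀ U : countableBasis X, ∃ L : ℕ → Set X, (∀ l, IsClosed (L l)) ∧ ⋃ l, L l = U :=
    fun U => exists_iUnion_isClosed_eq_of_isOpen (isOpen_of_mem_countableBasis U.2)
  have hK : ∀ U : countableBasis X, ∃ K : ℕ → Set Y, (∀ m, IsClosed (K m)) ∧ ⋃ m, K m = f '' U :=
    fun U => exists_iUnion_isClosed_eq_of_isOpen (ho _ (isOpen_of_mem_countableBasis U.2))
  choose L hLc hLU using hL
  choose K hKc hKU using hK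
  have hKN : ∀ U m, IsClosed (K U m \ N U) := fun U m => (hKc U m).sdiff
    (isOpen_setOf_nontrivial_inter_fiber ho (isOpen_of_mem_countableBasis U.2))
  refine ⟨range fun p : countableBasis X × ℕ × ℕ =>
    L p.1 p.2.1 ∩ f ⁻¹' (K p.1 p.2.2 \ N p.1), countable_range _, ?_, forall_mem_range.2 ?_⟩
  · refine sUnion_eq_univ_iff.2 fun x => ?_
    obtain ⟨G, hGo, hGx⟩ := isOpen_inter_eq_singleton_of_mem_discrete (hfib (f x)) rfl
    obtain ⟨U, hU, hxU, hUG⟩ := (isBasis_countableBasis X).exists_subset_of_mem_open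
      (hGx.ge rfl).1 hGo
    obtain ⟨l, hl⟩ := mem_iUnion.1 ((hLU ⟨U, hU⟩).ge hxU)
    obtain ⟨m, hm⟩ := mem_iUnion.1 ((hKU ⟨U, hU⟩).ge (mem_image_of_mem f hxU))
    have hsub : (U ∩ f ⁻¹' {f x}).Subsingleton :=
      subsingleton_singleton.anti ((inter_subset_inter_left _ hUG).trans hGx.le)
    exact ⟨_, ⟨(⟨U, hU⟩, l, m), rfl⟩, hl, hm, not_nontrivial_iff.2 hsub⟩
  · rintro ⟨U, l, m⟩
    have hinj : InjOn f (U ∩ f ⁻¹' (K U m \ N U)) := fun a ha b hb hab =>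
      not_nontrivial_iff.1 ha.2.2 ⟨ha.1, rfl⟩ ⟨hb.1, hab.symm⟩
    exact ⟨(hLc U l).inter ((hKN U m).preimage hf),
      isClosedEmbedding_domRestrict_of_isOpenMap ho hf (isOpen_of_mem_countableBasis U.2) (hLc U l)
        ((subset_iUnion _ l).trans (hLU U).le) (hKN U m)
        (sdiff_subset.trans ((subset_iUnion _ m).trans (hKU U).le)) hinj⟩

end OpenMap

theorem paracompactSpace_of_pseudoMetrizable (X : Type*) [TopologicalSpace X]
    [PseudoMetrizableSpace X] : ParacompactSpace X :=
  letI := pseudoMetrizableSpacePseudoMetric X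
  inferInstance

theorem stmt10_general {X Y : Type*} [TopologicalSpace X] [T3Space X] [SecondCountableTopology X]
    [TopologicalSpace Y] [RegularSpace Y] (f : X → Y) (hc : Continuous f) (ho : IsOpenMap f)
    (hs : Function.Surjective f) (hfib : ∀ y, IsDiscrete (f ⁻¹' {y})) :
    covDim X = covDim Y := by
  have : SecondCountableTopology Y := (ho.isQuotientMap hc hs).secondCountableTopology ho
  have := paracompactSpace_of_pseudoMetrizable X
  have := paracompactSpace_of_pseudoMetrizable Y
  obtain ⟨𝒟, h𝒟, hcover, hD⟩ := exists_countable_isClosedEmbedding_cover ho hc hfib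
  have : Countable 𝒟 := h𝒟.to_subtype
  have hincl : ∀ D : 𝒟, IsClosedEmbedding (Subtype.val : D.1 → X) := fun D =>
    (hD D D.2).1.isClosedEmbedding_subtypeVal
  have hmap : ∀ D : 𝒟, IsClosedEmbedding (D.1.domRestrict f) := fun D => (hD D D.2).2
  have hcoverX : ⋃ D : 𝒟, range (Subtype.val : D.1 → X) = univ := by
    simp only [Subtype.range_coe, ← sUnion_eq_iUnion, hcover]
  have hcoverY : ⋃ D : 𝒟, range (D.1.domRestrict f) = univ := by
    simp only [range_domRestrict]
    rw [← image_iUnion, ← sUnion_eq_iUnion, hcover, image_univ_of_surjective hs]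
  have hiff : ∀ n, CovDimLE X n ↔ CovDimLE Y n := fun n => by
    refine ⟨fun h => ?_, fun h => ?_⟩
    · exact .of_countable_isClosedEmbedding hmap hcoverY fun D => h.of_isClosedEmbedding_s10 (hincl D)
    · exact .of_countable_isClosedEmbedding hincl hcoverX fun D => h.of_isClosedEmbedding_s10 (hmap D)
  simp only [covDim, hiff]

/-- Nagami's theorem: an open continuous surjection with finite fibers between separable
metric spaces preserves covering dimension. -/
theorem stmt10 {X Y : Type*} [MetricSpace X] [MetricSpace Y]
    [TopologicalSpace.SeparableSpace X] [TopologicalSpace.SeparableSpace Y]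
    (f : X → Y) (hc : Continuous f) (ho : IsOpenMap f) (hs : Function.Surjective f)
    (hfib : ∀ y : Y, (f ⁻¹' {y}).Finite) :
    covDim X = covDim Y := by
  have : SecondCountableTopology X := UniformSpace.secondCountable_of_separable X
  exact stmt10_general f hc ho hs fun y => (hfib y).isDiscrete
end

section
/- The space GH_{=n} of isometry classes of n-point metric spaces with the Gromov-Hausdorff distance has covering dimension n(n−1)/2. -/
/-!
The upper bound comes from a decomposition into `n.choose 2 + 1` zero-dimensional pieces. Take
pairwise disjoint dense sets of reals `ℚ + k√2` for `k ≤ n.choose 2`. An `n`-point space has only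
`n.choose 2` distances, so one of these sets contains none of them; and the spaces whose distances
avoid a dense set `D` have neighbourhoods whose frontier they miss, given by bounding every distance
strictly between two elements of `D`. Each zero-dimensional piece has a disjoint open refinement.

For the lower bound, any choice of distances in `[1, 2]` is a metric. Prescribing distances in
disjoint subintervals of `[1, 2]`, one for each pair of points, makes the pairs recognizable from
the isometry class, so a simplex of dimension `n.choose 2` embeds as a closed subset. That this
simplex has covering dimension at least `n.choose 2` is Lebesgue's covering theorem. It is deduced
from Scarf's lemma, applied to a fine net ordered by the barycentric coordinates, which replaces
Sperner's lemma and needs no triangulation.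
-/

section Scarf

open Finset
open scoped Classical

variable {α I T : Type*}

theorem card_filter_exists_ne_map_eq {S : Finset T} {f : T → I} (h : #S = #(S.image f) + 1) :
    #{y ∈ S | ∃ x ∈ S, x ≠ y ∧ f x = f y} = 2 := by
  obtain ⟨a, ha, b, hb, hab, hfab⟩ :=
    exists_ne_map_eq_of_card_lt_of_maps_to (t := S.image f) (by lia)
      fun x hx ↦ mem_image_of_mem f hx
  have himage : (S.erase a).image f = S.image f := by
    rw [← insert_erase ha, image_insert, insert_erase ha, eq_comm, insert_eq_self, hfab]
    exact mem_image_of_mem f (mem_erase.2 ⟨hab.symm, hb⟩)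
  have hinj : Set.InjOn f (S.erase a) := card_image_iff.1 (by
    rw [himage, card_erase_of_mem ha, h, Nat.add_sub_cancel])
  have hpair : {y ∈ S | ∃ x ∈ S, x ≠ y ∧ f x = f y} = {a, b} := by
    ext y
    simp only [mem_filter, mem_insert, mem_singleton]
    constructor
    · rintro ⟨hy, x, hx, hxy, hfxy⟩
      by_contra! hne
      obtain rfl | hxa := eq_or_ne x a
      · exact hne.2 (hinj (by simp [hy, hne.1]) (by simp [hb, hab.symm]) (hfxy.symm.trans hfab))
      · exact hxy (hinj (by simp [hx, hxa]) (by simp [hy, hne.1]) hfxy)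
    · rintro (rfl | rfl)
      · exact ⟨ha, b, hb, hab.symm, hfab.symm⟩
      · exact ⟨hb, a, ha, hab, hfab⟩
  rw [hpair, card_pair hab]

theorem even_card_filter_image_erase_eq [Fintype I] {S : Finset T} {c : T → I} (i₀ : I)
    (hcard : #S = Fintype.card I) (hS : S.image c ≠ univ) :
    Even #{y ∈ S | (S.erase y).image c = univ.erase i₀} := by
  obtain hempty | ⟨z, hz⟩ := {y ∈ S | (S.erase y).image c = univ.erase i₀}.eq_empty_or_nonempty
  · simp [hempty]
  have himage : S.image c = univ.erase i₀ := by
    refine (eq_of_subset_of_card_le ?_ ?_).symm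
    · rw [← (mem_filter.1 hz).2]
      exact image_subset_image (erase_subset z S)
    · rw [card_erase_of_mem (mem_univ i₀)]
      exact Nat.le_pred_of_lt ((card_lt_iff_ne_univ _).2 hS)
  have hcollide : ∀ y ∈ S,
      (S.erase y).image c = univ.erase i₀ ↔ ∃ x ∈ S, x ≠ y ∧ c x = c y := by
    intro y hy
    rw [← himage]
    conv_lhs => rw [← insert_erase hy, image_insert, erase_insert (notMem_erase y S), eq_comm,
      insert_eq_self]
    simp [and_comm, and_assoc]
  rw [filter_congr hcollide, card_filter_exists_ne_map_eq]
  · exact even_two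
  · rw [himage, card_erase_add_one (mem_univ i₀), hcard, card_univ]

variable [LinearOrder α]

/-- Scarf's primitive sets: `T` carries one linear preorder `r i` for each `i : I`, and `S` is
dominating when no point lies strictly above the `r i`-minimum of `S` for all `i` at once. -/
def IsDominating (r : I → T → α) (S : Finset T) : Prop :=
  ∀ y, ∃ i, ∀ x ∈ S, r i y ≤ r i x

/-- The points whose addition to `τ` yields a dominating set: in Scarf's picture, the rooms
adjacent to the door `τ`. -/
noncomputable def extensions [Fintype T] (r : I → T → α) (τ : Finset T) : Finset T :=
  {y | y ∉ τ ∧ IsDominating r (insert y τ)}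

/-- Slack points for the orders `r i`: `s i` is the `r i`-minimum of all points, and in each order
every point which is not a slack point lies below all the other `s j`. -/
structure IsSlack (r : I → T → α) (s : I → T) : Prop where
  lt_of_ne ⦃i : I⦄ ⦃t : T⦄ : t ≠ s i → r i (s i) < r i t
  lt_slack ⦃i j : I⦄ ⦃t : T⦄ : i ≠ j → t ∉ Set.range s → r i t < r i (s j)

theorem IsDominating.mono {r : I → T → α} {S τ : Finset T} (hS : IsDominating r S) (h : τ ⊆ S) :
    IsDominating r τ := fun y ↦
  (hS y).imp fun _ hi x hx ↦ hi x (h hx)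

variable {r : I → T → α} {s : I → T} {τ : Finset T} {μ : I → T}

/-- `μ i` is an `r i`-minimal element of `τ`, for each `i`. -/
def IsArgmin (r : I → T → α) (τ : Finset T) (μ : I → T) : Prop :=
  ∀ i, μ i ∈ τ ∧ ∀ z ∈ τ, r i (μ i) ≤ r i z

theorem exists_isArgmin (r : I → T → α) (hτ : τ.Nonempty) : ∃ μ, IsArgmin r τ μ := by
  choose μ hμ using fun i ↦ exists_min_image τ (r i) hτ
  exact ⟨μ, hμ⟩

theorem IsArgmin.eq_of_forall_le (hr : ∀ i, Function.Injective (r i)) (hμ : IsArgmin r τ μ)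
    {i : I} {x : T} (hx : x ∈ τ) (h : ∀ z ∈ τ, r i x ≤ r i z) : μ i = x :=
  hr i (le_antisymm ((hμ i).2 x hx) (h _ (hμ i).1))

theorem IsArgmin.exists_eq (hr : ∀ i, Function.Injective (r i)) (hμ : IsArgmin r τ μ)
    (hτ : IsDominating r τ) {x : T} (hx : x ∈ τ) : ∃ i, μ i = x :=
  (hτ x).imp fun _ hi ↦ hμ.eq_of_forall_le hr hx hi

theorem IsArgmin.image_eq [Fintype I] (hr : ∀ i, Function.Injective (r i)) (hμ : IsArgmin r τ μ)
    (hτ : IsDominating r τ) : univ.image μ = τ := by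
  ext x
  simp only [mem_image, mem_univ, true_and]
  exact ⟨fun ⟨i, hi⟩ ↦ hi ▸ (hμ i).1, hμ.exists_eq hr hτ⟩

/-- The `r i`-maximum of the points which exceed the minimum `μ j` of the door for all `j ≠ i`:
the point that Scarf's pivot step brings in when the bound in the order `r i` is released. -/
def IsPivot (r : I → T → α) (μ : I → T) (i : I) (y : T) : Prop :=
  (∀ j ≠ i, r j (μ j) < r j y) ∧ ∀ z, (∀ j ≠ i, r j (μ j) < r j z) → r i z ≤ r i y

theorem IsPivot.unique (hr : ∀ i, Function.Injective (r i)) {i : I} {y z : T}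
    (hy : IsPivot r μ i y) (hz : IsPivot r μ i z) : y = z :=
  hr i (le_antisymm (hz.2 y hy.1) (hy.2 z hz.1))

theorem IsSlack.exists_isPivot [Finite T] (hs : IsSlack r s) (hμ : IsArgmin r τ μ) {t : T}
    (ht : t ∈ τ) (hts : t ∉ Set.range s) (i : I) : ∃ y, IsPivot r μ i y := by
  have := Fintype.ofFinite T
  obtain ⟨y, hy, hmax⟩ := exists_max_image {z | ∀ j ≠ i, r j (μ j) < r j z} (r i)
    ⟨s i, by
      simpa using fun j hj ↦ ((hμ j).2 t ht).trans_lt (hs.lt_slack hj hts)⟩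
  exact ⟨y, by simpa using hy, fun z hz ↦ hmax z (by simpa using hz)⟩

theorem IsPivot.mem_extensions [Fintype T] (hr : ∀ i, Function.Injective (r i))
    (hμ : IsArgmin r τ μ) (hτ : IsDominating r τ) {i i' : I} (hne : i' ≠ i) (heq : μ i' = μ i)
    {y : T} (hy : IsPivot r μ i y) : y ∈ extensions r τ := by
  refine mem_filter.2 ⟨mem_univ y, fun hyτ ↦ ?_, fun z ↦ ?_⟩
  · obtain ⟨j, rfl⟩ := hμ.exists_eq hr hτ hyτ
    obtain rfl | hj := eq_or_ne j i
    · exact (hy.1 i' hne).ne (by rw [heq])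
    · exact (hy.1 j hj).ne rfl
  by_cases hz : ∀ j ≠ i, r j (μ j) < r j z
  · refine ⟨i, forall_mem_insert _ _ _ |>.2 ⟨hy.2 z hz, ?_⟩⟩
    obtain ⟨j, hj⟩ := hτ z
    obtain rfl | hji := eq_or_ne j i
    · exact hj
    · exact absurd (hj _ (hμ j).1) (hz j hji).not_ge
  · push Not at hz
    obtain ⟨j, hji, hj⟩ := hz
    exact ⟨j, forall_mem_insert _ _ _ |>.2
      ⟨hj.trans (hy.1 j hji).le, fun x hx ↦ hj.trans ((hμ j).2 x hx)⟩⟩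

theorem exists_isPivot_of_mem_extensions [Fintype I] [Fintype T]
    (hr : ∀ i, Function.Injective (r i)) (hμ : IsArgmin r τ μ) (hcard : #τ + 1 = Fintype.card I)
    {y : T} (hy : y ∈ extensions r τ) : ∃ i, (∃ i' ≠ i, μ i' = μ i) ∧ IsPivot r μ i y := by
  obtain ⟨hyτ, hdom⟩ := (mem_filter.1 hy).2
  obtain ⟨i, hi⟩ := hdom y
  rw [forall_mem_insert] at hi
  have hcover : τ ⊆ (univ.filter fun j ↦ r j (μ j) < r j y).image μ := by
    intro x hx
    obtain ⟨j, hj⟩ := hdom x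
    rw [forall_mem_insert] at hj
    have hjx : μ j = x := hμ.eq_of_forall_le hr hx hj.2
    refine mem_image.2 ⟨j, mem_filter.2 ⟨mem_univ j, hjx ▸ hj.1.lt_of_ne fun h ↦ hyτ ?_⟩, hjx⟩
    exact hr j h ▸ hx
  have habove : (univ.filter fun j ↦ r j (μ j) < r j y) = univ.erase i := by
    refine eq_of_subset_of_card_le (fun j hj ↦ ?_) ?_
    · refine mem_erase.2 ⟨?_, mem_univ j⟩
      rintro rfl
      exact (hi.2 _ (hμ j).1).not_gt (mem_filter.1 hj).2
    · rw [card_erase_of_mem (mem_univ i), card_univ]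
      have := (card_le_card hcover).trans card_image_le
      lia
  have hlt : ∀ j ≠ i, r j (μ j) < r j y := fun j hj ↦ by
    simpa [hj] using Finset.ext_iff.1 habove j
  rw [habove] at hcover
  obtain ⟨i', hi', heq⟩ := mem_image.1 (hcover (hμ i).1)
  refine ⟨i, ⟨i', (mem_erase.1 hi').1, heq⟩, hlt, fun z hz ↦ ?_⟩
  obtain ⟨j, hj⟩ := hdom z
  rw [forall_mem_insert] at hj
  obtain rfl | hji := eq_or_ne j i
  · exact hj.1
  · exact absurd (hj.2 _ (hμ j).1) (hz j hji).not_ge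

theorem IsSlack.even_card_extensions [Fintype I] [Fintype T] (hr : ∀ i, Function.Injective (r i))
    (hs : IsSlack r s) (hcard : #τ + 1 = Fintype.card I) {t : T} (ht : t ∈ τ)
    (hts : t ∉ Set.range s) : Even #(extensions r τ) := by
  obtain hempty | ⟨z, hz⟩ := (extensions r τ).eq_empty_or_nonempty
  · simp [hempty]
  have hτ : IsDominating r τ := (mem_filter.1 hz).2.2.mono (subset_insert z τ)
  obtain ⟨μ, hμ⟩ := exists_isArgmin r ⟨t, ht⟩
  choose m hm using fun i ↦ hs.exists_isPivot hμ ht hts i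
  have hcard_two : #{i | ∃ i' ≠ i, μ i' = μ i} = 2 := by
    simpa using card_filter_exists_ne_map_eq (S := univ) (f := μ)
      (by rw [hμ.image_eq hr hτ, hcard, card_univ])
  have hext : extensions r τ = image m {i | ∃ i' ≠ i, μ i' = μ i} := by
    ext y
    simp only [mem_image, mem_filter, mem_univ, true_and]
    constructor
    · intro hy
      obtain ⟨i, hi, hiy⟩ := exists_isPivot_of_mem_extensions hr hμ hcard hy
      exact ⟨i, hi, (hm i).unique hr hiy⟩
    · rintro ⟨i, ⟨i', hne, heq⟩, rfl⟩
      exact (hm i).mem_extensions hr hμ hτ hne heq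
  have hinj : Function.Injective m := by
    intro a b hab
    by_contra hne
    obtain ⟨j, hj⟩ := hτ (m a)
    obtain rfl | hja := eq_or_ne j a
    · exact (hj _ (hμ j).1).not_gt (hab ▸ (hm b).1 j hne)
    · exact (hj _ (hμ j).1).not_gt ((hm a).1 j hja)
  rw [hext, card_image_of_injective _ hinj, hcard_two]
  exact even_two

theorem IsSlack.extensions_image_erase [Fintype I] [Fintype T]
    (hr : ∀ i, Function.Injective (r i)) (hs : IsSlack r s) {i₀ : I} {y : T}
    (hy : y ∉ Set.range s) (hmax : ∀ z ∉ Set.range s, r i₀ z ≤ r i₀ y) :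
    extensions r ((univ.erase i₀).image s) = {y} := by
  have hmem : ∀ i ≠ i₀, s i ∈ (univ.erase i₀).image s := fun i hi ↦
    mem_image_of_mem s (mem_erase.2 ⟨hi, mem_univ i⟩)
  refine Finset.ext fun w ↦ ?_
  simp only [extensions, mem_filter, mem_univ, true_and, mem_singleton]
  constructor
  · rintro ⟨hw, hdom⟩
    obtain ⟨i, hi⟩ := hdom y
    rw [forall_mem_insert] at hi
    have hi₀ : i = i₀ := by
      by_contra hne
      exact (hs.lt_of_ne fun h ↦ hy ⟨i, h.symm⟩).not_ge (hi.2 _ (hmem i hne))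
    subst hi₀
    refine hr i (le_antisymm (hmax w ?_) hi.1)
    rintro ⟨k, rfl⟩
    obtain rfl | hk := eq_or_ne k i
    · exact (hs.lt_of_ne fun h ↦ hy ⟨k, h.symm⟩).not_ge hi.1
    · exact hw (hmem k hk)
  · rintro rfl
    refine ⟨fun h ↦ ?_, fun z ↦ ?_⟩
    · obtain ⟨k, -, hk⟩ := mem_image.1 h
      exact hy ⟨k, hk⟩
    by_cases hz : z ∈ Set.range s
    · obtain ⟨k, rfl⟩ := hz
      refine ⟨k, fun x _ ↦ ?_⟩
      obtain rfl | hx := eq_or_ne x (s k)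
      · exact le_rfl
      · exact (hs.lt_of_ne hx).le
    · refine ⟨i₀, forall_mem_insert _ _ _ |>.2 ⟨hmax z hz, forall_mem_image.2 fun k hk ↦ ?_⟩⟩
      exact (hs.lt_slack (mem_erase.1 hk).1.symm hz).le


/-- The doors in Scarf's argument: the sets of `#I - 1` points showing each colour except `i₀`
exactly once. -/
noncomputable def doors [Fintype I] [Fintype T] (c : T → I) (i₀ : I) : Finset (Finset T) :=
  {τ | #τ + 1 = Fintype.card I ∧ τ.image c = univ.erase i₀}

/-- The rooms in Scarf's argument: the dominating sets with `#I` points. -/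
noncomputable def rooms [Fintype I] [Fintype T] (r : I → T → α) : Finset (Finset T) :=
  {S | #S = Fintype.card I ∧ IsDominating r S}

theorem sum_card_extensions_doors [Fintype I] [Fintype T] (r : I → T → α) (c : T → I) (i₀ : I) :
    ∑ τ ∈ doors c i₀, #(extensions r τ) =
      ∑ S ∈ rooms r, #{y ∈ S | (S.erase y).image c = univ.erase i₀} := by
  rw [← card_sigma, ← card_sigma]
  refine card_nbij' (fun p ↦ ⟨insert p.2 p.1, p.2⟩) (fun p ↦ ⟨p.1.erase p.2, p.2⟩) ?_ ?_ ?_ ?_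
  · rintro ⟨τ, y⟩ h
    simp only [doors, extensions, rooms, coe_sigma, Set.mem_sigma_iff, mem_coe, mem_filter,
      mem_univ, true_and] at h ⊢
    obtain ⟨⟨hcard, himage⟩, hy, hdom⟩ := h
    exact ⟨⟨by rw [card_insert_of_notMem hy, hcard], hdom⟩, mem_insert_self y τ,
      by rw [erase_insert hy, himage]⟩
  · rintro ⟨S, y⟩ h
    simp only [doors, extensions, rooms, coe_sigma, Set.mem_sigma_iff, mem_coe, mem_filter,
      mem_univ, true_and] at h ⊢
    obtain ⟨⟨hcard, hdom⟩, hy, himage⟩ := h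
    exact ⟨⟨by rw [card_erase_add_one hy, hcard], himage⟩, notMem_erase y S,
      by rwa [insert_erase hy]⟩
  · rintro ⟨τ, y⟩ h
    simp [erase_insert (mem_filter.1 (mem_sigma.1 h).2).2.1]
  · rintro ⟨S, y⟩ h
    simp [insert_erase (mem_filter.1 (mem_sigma.1 h).2).1]

theorem IsSlack.odd_sum_card_extensions_doors [Fintype I] [Fintype T]
    (hr : ∀ i, Function.Injective (r i)) (hs : IsSlack r s) {t : T} (ht : t ∉ Set.range s)
    {c : T → I} (hc : ∀ i, c (s i) = i) (i₀ : I) :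
    Odd (∑ τ ∈ doors c i₀, #(extensions r τ)) := by
  have hinj : Function.Injective s := Function.LeftInverse.injective hc
  have hmem : (univ.erase i₀).image s ∈ doors c i₀ := by
    refine mem_filter.2 ⟨mem_univ _, ?_, ?_⟩
    · rw [card_image_of_injective _ hinj, card_erase_add_one (mem_univ i₀), card_univ]
    · rw [image_image, show c ∘ s = id from funext hc, image_id]
  rw [← add_sum_erase _ _ hmem]
  refine Odd.add_even ?_ (even_sum _ fun τ hτ ↦ ?_)
  · obtain ⟨y, hy, hmax⟩ := exists_max_image {z | z ∉ Set.range s} (r i₀) ⟨t, by simpa using ht⟩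
    rw [hs.extensions_image_erase hr (mem_filter.1 hy).2 fun z hz ↦ hmax z (by simpa using hz),
      card_singleton]
    exact odd_one
  · obtain ⟨hne, hτ⟩ := mem_erase.1 hτ
    obtain ⟨hcard, himage⟩ := (mem_filter.1 hτ).2
    obtain ⟨x, hx, hxs⟩ : ∃ x ∈ τ, x ∉ Set.range s := by
      by_contra! hslack
      refine hne (eq_of_subset_of_card_le (fun x hx ↦ ?_) ?_)
      · obtain ⟨k, rfl⟩ := hslack x hx
        exact mem_image_of_mem s (himage ▸ mem_image.2 ⟨s k, hx, hc k⟩)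
      · rw [card_image_of_injective _ hinj, card_erase_of_mem (mem_univ i₀), card_univ, ← hcard,
          Nat.add_sub_cancel]
    exact hs.even_card_extensions hr hcard hx hxs

theorem IsSlack.exists_isDominating_image_eq_univ [Fintype I] [Finite T]
    (hr : ∀ i, Function.Injective (r i)) (hs : IsSlack r s) {t : T} (ht : t ∉ Set.range s)
    {c : T → I} (hc : ∀ i, c (s i) = i) :
    ∃ S : Finset T, IsDominating r S ∧ S.image c = univ := by
  have := Fintype.ofFinite T
  by_contra! hcolour
  refine Nat.not_even_iff_odd.2 (hs.odd_sum_card_extensions_doors hr ht hc (c t)) ?_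
  rw [sum_card_extensions_doors]
  refine even_sum _ fun S hS ↦ ?_
  obtain ⟨hcard, hdom⟩ := (mem_filter.1 hS).2
  exact even_card_filter_image_erase_eq (c t) hcard (hcolour S hdom)

end Scarf

section SlackOrder

open Finset

variable {α I G : Type*}

open scoped Classical in
/-- The orders that the weights `u` induce on `G` with one slack point adjoined for each `i : I`.
The second component breaks ties, so that each order becomes linear. -/
noncomputable def slackOrder (u : I → G → α) (e : G ⊕ I → ℕ) (i : I) (t : G ⊕ I) :
    WithBot (WithTop α) ×ₗ ℕ :=
  toLex (Sum.elim (fun x ↦ ((u i x : WithTop α) : WithBot (WithTop α)))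
    (fun j ↦ if j = i then ⊥ else ((⊤ : WithTop α) : WithBot (WithTop α))) t, e t)

theorem injective_slackOrder (u : I → G → α) {e : G ⊕ I → ℕ} (he : Function.Injective e) (i : I) :
    Function.Injective (slackOrder u e i) := fun _ _ h ↦
  he (congrArg Prod.snd (toLex_inj.1 h))

theorem isSlack_slackOrder [LinearOrder α] (u : I → G → α) (e : G ⊕ I → ℕ) :
    IsSlack (slackOrder u e) Sum.inr where
  lt_of_ne i t ht := by
    refine Prod.Lex.toLex_lt_toLex.2 (.inl ?_)
    obtain x | j := t
    · simp
    · have hj : j ≠ i := fun h ↦ ht (h ▸ rfl)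
      simp [hj]
  lt_slack i j t hij ht := by
    refine Prod.Lex.toLex_lt_toLex.2 (.inl ?_)
    obtain x | k := t
    · simpa [hij.symm] using WithBot.coe_lt_coe.2 (WithTop.coe_lt_top _)
    · exact absurd ⟨k, rfl⟩ ht

/-- **Scarf's lemma**. -/
theorem exists_dominating_colored [LinearOrder α] [Finite G] [Finite I] (u : I → G → α)
    (c : G → I) : ∃ σ : Finset G, ∀ y, ∃ z ∈ σ, ∀ x ∈ σ, u (c z) y ≤ u (c z) x := by
  classical
  have := Fintype.ofFinite I
  obtain hG | ⟨⟨g⟩⟩ := isEmpty_or_nonempty G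
  · exact ⟨∅, isEmptyElim⟩
  obtain ⟨e, he⟩ := exists_injective_nat (G ⊕ I)
  obtain ⟨S, hdom, hcolour⟩ := (isSlack_slackOrder u e).exists_isDominating_image_eq_univ
    (injective_slackOrder u he) (t := .inl g) (by simp) (c := Sum.elim c id) fun _ ↦ rfl
  refine ⟨S.toLeft, fun y ↦ ?_⟩
  obtain ⟨i, hi⟩ := hdom (.inl y)
  obtain ⟨z | j, hz, rfl⟩ := mem_image.1 (hcolour ▸ mem_univ i : i ∈ S.image (Sum.elim c id))
  · refine ⟨z, by simpa using hz, fun x hx ↦ ?_⟩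
    simpa [slackOrder] using Prod.Lex.monotone_fst _ _ (hi (.inl x) (by simpa using hx))
  · have := Prod.Lex.monotone_fst _ _ (hi _ hz)
    simp [slackOrder] at this

end SlackOrder

section Simplex

variable {I : Type*} [Fintype I]

theorem exists_stdSimplex_forall_le [Nonempty I] {w : I → ℝ} (hw : ∀ i, 0 ≤ w i)
    (hsum : ∑ i, w i ≤ 1) : ∃ y : stdSimplex ℝ I, ∀ i, w i ≤ y i := by
  classical
  obtain ⟨i₀⟩ := ‹Nonempty I›
  have hle : w ≤ w + Pi.single i₀ (1 - ∑ i, w i) :=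
    le_add_of_nonneg_right (Pi.single_nonneg.2 (sub_nonneg.2 hsum))
  exact ⟨⟨_, fun i ↦ (hw i).trans (hle i), by simp [Finset.sum_add_distrib]⟩, hle⟩

theorem exists_finset_forall_lt_add (c : stdSimplex ℝ I → I) {δ : ℝ} (hδ : 0 < δ) :
    ∃ σ : Finset (stdSimplex ℝ I), ∀ y : stdSimplex ℝ I, ∃ z ∈ σ, ∀ x ∈ σ,
      y (c z) < x (c z) + δ := by
  obtain ⟨N, -, hNfin, hN⟩ :=
    finite_cover_balls_of_compact (isCompact_univ (X := stdSimplex ℝ I)) hδ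
  have := hNfin.to_subtype
  obtain ⟨σ, hσ⟩ := exists_dominating_colored (G := N) (fun i x ↦ x.1 i) (fun x ↦ c x)
  refine ⟨σ.map (Function.Embedding.subtype _), fun y ↦ ?_⟩
  obtain ⟨y', hy', hyy'⟩ := Set.mem_iUnion₂.1 (hN (Set.mem_univ y))
  obtain ⟨z, hz, hmin⟩ := hσ ⟨y', hy'⟩
  refine ⟨z, Finset.mem_map_of_mem _ hz, Finset.forall_mem_map.2 fun x hx ↦ ?_⟩
  have hclose : |y (c z) - y' (c z)| < δ :=
    (dist_le_pi_dist y.1 y'.1 (c z)).trans_lt (Metric.mem_ball.1 hyy')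
  exact (lt_add_of_sub_left_lt (abs_lt.1 hclose).2).trans_le (add_le_add_left (hmin x hx) δ)

theorem exists_finset_le_of_coloring [Nonempty I] (c : stdSimplex ℝ I → I) {η : ℝ} (hη : 0 < η) :
    ∃ σ : Finset (stdSimplex ℝ I), σ.Nonempty ∧ ∃ w : I → ℝ,
      (∀ x ∈ σ, ∀ i, w i ≤ x i ∧ x i ≤ w i + η) ∧ ∀ j, (∀ x ∈ σ, c x ≠ j) → w j = 0 := by
  classical
  have hcard : (0 : ℝ) < Fintype.card I := by exact_mod_cast Fintype.card_pos
  have hδ : 0 < η / Fintype.card I := div_pos hη hcard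
  obtain ⟨σ, hσ⟩ := exists_finset_forall_lt_add c hδ
  have hne : σ.Nonempty := (hσ (Classical.arbitrary _)).imp fun _ h ↦ h.1
  set w : I → ℝ := fun i ↦ if ∃ z ∈ σ, c z = i then σ.inf' hne (· i) else 0
  have hw_nonneg : ∀ i, 0 ≤ w i := fun i ↦ by
    by_cases hi : ∃ z ∈ σ, c z = i
    · simpa only [w, if_pos hi] using (Finset.le_inf'_iff hne _).2 fun x _ ↦
        stdSimplex.zero_le x i
    · simp only [w, if_neg hi, le_refl]
  have hw_le : ∀ x ∈ σ, ∀ i, w i ≤ x i := fun x hx i ↦ by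
    by_cases hi : ∃ z ∈ σ, c z = i
    · simpa only [w, if_pos hi] using Finset.inf'_le (fun y : stdSimplex ℝ I ↦ y i) hx
    · simpa only [w, if_neg hi] using stdSimplex.zero_le x i
  have hsum : 1 < ∑ i, (w i + η / Fintype.card I) := by
    by_contra! hle
    obtain ⟨y, hy⟩ := exists_stdSimplex_forall_le (fun i ↦ add_nonneg (hw_nonneg i) hδ.le) hle
    obtain ⟨z, hz, hlt⟩ := hσ y
    obtain ⟨x, hx, hwx⟩ := σ.exists_mem_eq_inf' hne (· (c z))
    have hw_eq : w (c z) = x (c z) := (if_pos ⟨z, hz, rfl⟩).trans hwx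
    exact ((hy (c z)).trans_lt (hlt x hx)).ne (by rw [hw_eq])
  rw [Finset.sum_add_distrib, Finset.sum_const, Finset.card_univ, nsmul_eq_mul,
    mul_div_cancel₀ _ hcard.ne'] at hsum
  refine ⟨σ, hne, w, fun x hx i ↦ ⟨hw_le x hx i, ?_⟩,
    fun j hj ↦ if_neg fun ⟨z, hz, hzj⟩ ↦ hj z hz hzj⟩
  have hgap : x i - w i ≤ ∑ i, (x i - w i) :=
    Finset.single_le_sum (f := fun i ↦ x i - w i) (fun i _ ↦ sub_nonneg.2 (hw_le x hx i))
      (Finset.mem_univ i)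
  rw [Finset.sum_sub_distrib, stdSimplex.sum_eq_one x] at hgap
  linarith

theorem exists_finset_dist_le_of_coloring [Nonempty I] (c : stdSimplex ℝ I → I) {ε η : ℝ}
    (hη : 0 < η) (hηε : η ≤ ε) (hε : 3 * ε * Fintype.card I < 1)
    (hc : ∀ (x : stdSimplex ℝ I) (j : I), x j ≤ ε → x (c x) ≤ 2 * ε) :
    ∃ σ : Finset (stdSimplex ℝ I), (∀ x ∈ σ, ∀ y ∈ σ, dist x y ≤ η) ∧ ∀ j, ∃ x ∈ σ, c x = j := by
  obtain ⟨σ, ⟨x₀, hx₀⟩, w, hw, hmissing⟩ := exists_finset_le_of_coloring c hη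
  refine ⟨σ, fun x hx y hy ↦ ?_, ?_⟩
  · refine (dist_pi_le_iff hη.le).2 fun i ↦ abs_sub_le_iff.2 ⟨?_, ?_⟩
    · exact sub_le_iff_le_add'.2 ((hw x hx i).2.trans (by gcongr; exact (hw y hy i).1))
    · exact sub_le_iff_le_add'.2 ((hw y hy i).2.trans (by gcongr; exact (hw x hx i).1))
  by_contra! h
  obtain ⟨j, hj⟩ := h
  have hnear : ∀ x ∈ σ, x j ≤ ε := fun x hx ↦ by
    linarith [(hw x hx j).2, hmissing j hj]
  have hw_le : ∀ i, w i ≤ 2 * ε := by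
    intro i
    by_cases hi : ∃ x ∈ σ, c x = i
    · obtain ⟨x, hx, rfl⟩ := hi
      exact (hw x hx _).1.trans (hc x j (hnear x hx))
    · push Not at hi
      linarith [hmissing i hi]
  have hle : ∑ i, x₀ i ≤ ∑ _i : I, 3 * ε := Finset.sum_le_sum fun i _ ↦ by
    linarith [(hw x₀ hx₀ i).2, hw_le i]
  rw [stdSimplex.sum_eq_one x₀, Finset.sum_const, Finset.card_univ, nsmul_eq_mul] at hle
  linarith

/-- **Lebesgue's covering theorem** for the simplex. -/
theorem exists_card_le_encard_of_stdSimplex_cover [Nonempty I] {V : Set (Set (stdSimplex ℝ I))}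
    (hVopen : ∀ v ∈ V, IsOpen v) (hVcover : ⋃₀ V = Set.univ) {ε : ℝ} (hε₀ : 0 < ε)
    (hε : 3 * ε * Fintype.card I < 1) (hVdist : ∀ v ∈ V, ∀ x ∈ v, ∀ y ∈ v, dist x y ≤ ε) :
    ∃ x, (Fintype.card I : ℕ∞) ≤ {v ∈ V | x ∈ v}.encard := by
  obtain ⟨δ, hδ, hδV⟩ := lebesgue_number_lemma_of_metric_sUnion isCompact_univ hVopen hVcover.ge
  choose v hvV hv using fun x ↦ hδV x (Set.mem_univ x)
  obtain ⟨label, hlabel⟩ : ∃ label : Set (stdSimplex ℝ I) → I,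
      ∀ (u : Set (stdSimplex ℝ I)) (j : I), (∃ z ∈ u, z j ≤ ε) → ∃ z ∈ u, z (label u) ≤ ε := by
    choose! f hf using fun (u : Set (stdSimplex ℝ I)) (h : ∃ j, ∃ z ∈ u, z j ≤ ε) ↦ h
    exact ⟨f, fun u j h ↦ hf u ⟨j, h⟩⟩
  have hnear : ∀ (x : stdSimplex ℝ I) (j : I), x j ≤ ε → x (label (v x)) ≤ 2 * ε := by
    intro x j hxj
    have hxv : x ∈ v x := hv x (Metric.mem_ball_self hδ)
    obtain ⟨z, hz, hzε⟩ := hlabel (v x) j ⟨x, hxv, hxj⟩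
    have hxz : |x (label (v x)) - z (label (v x))| ≤ ε :=
      (dist_le_pi_dist x.1 z.1 (label (v x))).trans (hVdist _ (hvV x) x hxv z hz)
    linarith [le_of_abs_le hxz]
  obtain ⟨σ, hσdist, hσ⟩ := exists_finset_dist_le_of_coloring (fun x ↦ label (v x))
    (lt_min hε₀ (half_pos hδ)) (min_le_left ε (δ / 2)) hε hnear
  choose p hpσ hp using hσ
  obtain ⟨i₀⟩ := ‹Nonempty I›
  have hinj : Function.Injective fun i ↦ v (p i) :=
    Function.LeftInverse.injective (g := label) hp
  refine ⟨p i₀, ?_⟩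
  rw [← ENat.card_eq_coe_fintype_card]
  refine hinj.encard_range.trans (Set.encard_le_encard ?_)
  rintro _ ⟨i, rfl⟩
  refine ⟨hvV _, hv _ (Metric.mem_ball.2 ?_)⟩
  exact (hσdist _ (hpσ i₀) _ (hpσ i)).trans_lt ((min_le_right _ _).trans_lt (half_lt_self hδ))

theorem CovDimLE.card_le_of_stdSimplex {k : ℕ} (hk : CovDimLE (stdSimplex ℝ I) k) :
    Fintype.card I ≤ k + 1 := by
  obtain hI | hI := isEmpty_or_nonempty I
  · simp
  obtain ⟨ε, hε₀, hε⟩ : ∃ ε : ℝ, 0 < ε ∧ 3 * ε * Fintype.card I < 1 := by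
    refine ⟨1 / (6 * Fintype.card I), by positivity, ?_⟩
    field_simp
    norm_num
  obtain ⟨V, hVopen, hVcover, hVball, hVcard⟩ := hk (Set.range (Metric.ball · (ε / 2)))
    (by rintro _ ⟨x, rfl⟩; exact Metric.isOpen_ball)
    (Set.eq_univ_of_forall fun x ↦ ⟨_, ⟨x, rfl⟩, Metric.mem_ball_self (half_pos hε₀)⟩)
  obtain ⟨x, hx⟩ := exists_card_le_encard_of_stdSimplex_cover hVopen hVcover hε₀ hε <| by
    intro v hv y hy z hz
    obtain ⟨_, ⟨a, rfl⟩, hva⟩ := hVball v hv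
    linarith [dist_triangle_right y z a, Metric.mem_ball.1 (hva hy), Metric.mem_ball.1 (hva hz)]
  exact_mod_cast hx.trans (hVcard x)

end Simplex

theorem CovDimLE.of_isClosedEmbedding_s14 {X Y : Type*} [TopologicalSpace X] [TopologicalSpace Y]
    {f : X → Y} (hf : Topology.IsClosedEmbedding f) {k : ℕ} (hY : CovDimLE Y k) :
    CovDimLE X k := by
  intro U hUopen hUcover
  have hopen : ∀ u ∈ insert (Set.range f)ᶜ {u | IsOpen u ∧ f ⁻¹' u ∈ U}, IsOpen u := by
    rintro u (rfl | hu)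
    exacts [hf.isClosed_range.isOpen_compl, hu.1]
  have hcover : ⋃₀ insert (Set.range f)ᶜ {u | IsOpen u ∧ f ⁻¹' u ∈ U} = Set.univ := by
    refine Set.eq_univ_of_forall fun y ↦ ?_
    by_cases hy : y ∈ Set.range f
    · obtain ⟨x, rfl⟩ := hy
      obtain ⟨u, hu, hxu⟩ := hUcover.ge (Set.mem_univ x)
      obtain ⟨w, hw, rfl⟩ := hf.isOpen_iff.1 (hUopen u hu)
      exact ⟨w, .inr ⟨hw, hu⟩, hxu⟩
    · exact ⟨_, .inl rfl, hy⟩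
  obtain ⟨V, hVopen, hVcover, hVU, hVcard⟩ := hY _ hopen hcover
  refine ⟨(f ⁻¹' ·) '' V \ {∅}, ?_, ?_, ?_, fun x ↦ ?_⟩
  · rintro _ ⟨⟨v, hv, rfl⟩, -⟩
    exact (hVopen v hv).preimage hf.continuous
  · refine Set.eq_univ_of_forall fun x ↦ ?_
    obtain ⟨v, hv, hxv⟩ := hVcover.ge (Set.mem_univ (f x))
    exact ⟨f ⁻¹' v, ⟨⟨v, hv, rfl⟩, Set.nonempty_iff_ne_empty.1 ⟨x, hxv⟩⟩, hxv⟩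
  · rintro _ ⟨⟨v, hv, rfl⟩, hne⟩
    obtain ⟨x, hx⟩ := Set.nonempty_iff_ne_empty.2 hne
    obtain ⟨u, rfl | hu, hvu⟩ := hVU v hv
    · exact absurd ⟨x, rfl⟩ (hvu hx)
    · exact ⟨_, hu.2, Set.preimage_mono hvu⟩
  · refine (Set.encard_le_encard ?_).trans
      ((Set.encard_image_le (f ⁻¹' ·) {v ∈ V | f x ∈ v}).trans (hVcard (f x)))
    rintro _ ⟨⟨⟨v, hv, rfl⟩, -⟩, hxv⟩
    exact ⟨v, ⟨hv, hxv⟩, rfl⟩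

section Decomposition

variable {X : Type*} [TopologicalSpace X]

/-- `Z` is zero-dimensional relative to `X`: the points of `Z` have arbitrarily small open
neighbourhoods in `X` whose frontier misses `Z`. -/
def IsZeroDimIn (Z : Set X) : Prop :=
  ∀ x ∈ Z, ∀ u ∈ nhds x, ∃ O ⊆ u, IsOpen O ∧ x ∈ O ∧ Disjoint (frontier O) Z

theorem pairwiseDisjoint_range_diff_iUnion_closure (O : ℕ → Set X) :
    (Set.range fun i ↦ O i \ ⋃ j < i, closure (O j)).PairwiseDisjoint id := by
  have hlt : ∀ i j, i < j →
      Disjoint (O i \ ⋃ l < i, closure (O l)) (O j \ ⋃ l < j, closure (O l)) := fun i j hij ↦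
    Set.disjoint_left.2 fun x hi hj ↦ hj.2 (Set.mem_iUnion₂.2 ⟨i, hij, subset_closure hi.1⟩)
  rintro _ ⟨i, rfl⟩ _ ⟨j, rfl⟩ hne
  obtain hij | hji := (show i ≠ j from fun h ↦ hne (by rw [h])).lt_or_gt
  · exact hlt i j hij
  · exact (hlt j i hji).symm

theorem IsZeroDimIn.exists_pairwiseDisjoint_refinement [SecondCountableTopology X] {Z : Set X}
    (hZ : IsZeroDimIn Z) {U : Set (Set X)} (hUopen : ∀ u ∈ U, IsOpen u) (hUcover : Z ⊆ ⋃₀ U) :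
    ∃ W : Set (Set X), (∀ w ∈ W, IsOpen w) ∧ Z ⊆ ⋃₀ W ∧ (∀ w ∈ W, ∃ u ∈ U, w ⊆ u) ∧
      W.PairwiseDisjoint id := by
  obtain rfl | ⟨z, hz⟩ := Z.eq_empty_or_nonempty
  · exact ⟨∅, by simp⟩
  have hlocal : ∀ x : Z, ∃ O : Set X, (∃ u ∈ U, O ⊆ u) ∧ IsOpen O ∧ x.1 ∈ O ∧
      Disjoint (frontier O) Z := by
    rintro ⟨x, hx⟩
    obtain ⟨u, hu, hxu⟩ := hUcover hx
    obtain ⟨O, hOu, hO⟩ := hZ x hx u ((hUopen u hu).mem_nhds hxu)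
    exact ⟨O, ⟨u, hu, hOu⟩, hO⟩
  choose O hOU hO hmem hfrontier using hlocal
  obtain ⟨S, hScount, hSunion⟩ := TopologicalSpace.isOpen_iUnion_countable O hO
  have hScover : ∀ x ∈ Z, ∃ s ∈ S, x ∈ O s := fun x hx ↦ by
    simpa using hSunion.ge (Set.mem_iUnion.2 ⟨⟨x, hx⟩, hmem ⟨x, hx⟩⟩)
  obtain ⟨f, rfl⟩ := hScount.exists_eq_range ((hScover z hz).imp fun _ h ↦ h.1)
  refine ⟨Set.range fun i ↦ O (f i) \ ⋃ j < i, closure (O (f j)), ?_, fun x hx ↦ ?_, ?_,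
    pairwiseDisjoint_range_diff_iUnion_closure fun i ↦ O (f i)⟩
  · rintro _ ⟨i, rfl⟩
    exact (hO _).sdiff ((Set.finite_lt_nat i).isClosed_biUnion fun j _ ↦ isClosed_closure)
  · have hex : ∃ i, x ∈ O (f i) := by simpa using hScover x hx
    classical
    refine ⟨_, ⟨Nat.find hex, rfl⟩, Nat.find_spec hex, fun hclosure ↦ ?_⟩
    obtain ⟨j, hj, hxj⟩ := Set.mem_iUnion₂.1 hclosure
    have hxO : x ∉ O (f j) := Nat.find_min hex hj
    refine Set.disjoint_left.1 (hfrontier (f j)) ?_ hx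
    rw [(hO _).frontier_eq]
    exact ⟨hxj, hxO⟩
  · rintro _ ⟨i, rfl⟩
    exact (hOU (f i)).imp fun u hu ↦ ⟨hu.1, Set.sdiff_subset.trans hu.2⟩

theorem CovDimLE.of_iUnion_isZeroDimIn [SecondCountableTopology X] {N : ℕ}
    {Z : Fin (N + 1) → Set X} (hZ : ∀ k, IsZeroDimIn (Z k)) (hcover : ⋃ k, Z k = Set.univ) :
    CovDimLE X N := by
  intro U hUopen hUcover
  choose W hWopen hWcover hWU hWdisj using fun k ↦
    (hZ k).exists_pairwiseDisjoint_refinement hUopen ((Set.subset_univ _).trans hUcover.ge)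
  refine ⟨⋃ k, W k, fun v hv ↦ ?_, ?_, fun v hv ↦ ?_, fun x ↦ ?_⟩
  · obtain ⟨k, hk⟩ := Set.mem_iUnion.1 hv
    exact hWopen k v hk
  · refine Set.eq_univ_of_univ_subset (hcover.ge.trans (Set.iUnion_subset fun k ↦ ?_))
    exact (hWcover k).trans (Set.sUnion_subset_sUnion (Set.subset_iUnion W k))
  · obtain ⟨k, hk⟩ := Set.mem_iUnion.1 hv
    exact hWU k v hk
  · have hone : ∀ k, {v ∈ W k | x ∈ v}.encard ≤ 1 := fun k ↦
      Set.encard_le_one_iff_subsingleton.2 fun v hv w hw ↦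
        (hWdisj k).elim hv.1 hw.1 (Set.not_disjoint_iff.2 ⟨x, hv.2, hw.2⟩)
    have hunion : {v ∈ ⋃ k, W k | x ∈ v} = ⋃ k, {v ∈ W k | x ∈ v} := Set.iUnion_inter _ _
    calc {v ∈ ⋃ k, W k | x ∈ v}.encard ≤ ∑ k, {v ∈ W k | x ∈ v}.encard :=
          hunion ▸ Set.encard_iUnion_le_of_fintype _
      _ ≤ ∑ _k : Fin (N + 1), 1 := Finset.sum_le_sum fun k _ ↦ hone k
      _ = N + 1 := by simp

end Decomposition

section FiniteSpaces

open GromovHausdorff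

theorem ghDist_le_of_equiv {X Y : Type*} [MetricSpace X] [CompactSpace X] [Nonempty X]
    [MetricSpace Y] [CompactSpace Y] [Nonempty Y] (e : X ≃ Y) {ε : ℝ}
    (he : ∀ x y, |dist (e x) (e y) - dist x y| ≤ ε) : ghDist X Y ≤ ε / 2 := by
  have h := ghDist_le_of_approx_subsets (s := Set.univ) (fun x : Set.univ ↦ e x) (ε₁ := 0)
    (ε₃ := 0) (fun x ↦ ⟨x, trivial, by simp⟩) (fun y ↦ ⟨⟨e.symm y, trivial⟩, by simp⟩)
    fun x y ↦ (abs_sub_comm _ _).trans_le (he x y)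
  linarith

theorem exists_forall_abs_dist_sub_lt_of_ghDist_lt {X Y : Type*} [MetricSpace X]
    [CompactSpace X] [Nonempty X] [MetricSpace Y] [CompactSpace Y] [Nonempty Y] {δ : ℝ}
    (h : ghDist X Y < δ) : ∃ f : X → Y, ∀ x y, |dist (f x) (f y) - dist x y| < 2 * δ := by
  obtain ⟨Φ, Ψ, hΦ, hΨ, heq⟩ := ghDist_eq_hausdorffDist X Y
  have hfin : Metric.hausdorffEDist (Set.range Φ) (Set.range Ψ) ≠ ⊤ :=
    Metric.hausdorffEDist_ne_top_of_nonempty_of_bounded (Set.range_nonempty _)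
      (Set.range_nonempty _) (isCompact_range hΦ.continuous).isBounded
      (isCompact_range hΨ.continuous).isBounded
  have hnear : ∀ x, ∃ y, dist (Φ x) (Ψ y) < δ := fun x ↦ by
    simpa using Metric.exists_dist_lt_of_hausdorffDist_lt (Set.mem_range_self x) (heq ▸ h) hfin
  choose f hf using hnear
  refine ⟨f, fun x y ↦ ?_⟩
  calc |dist (f x) (f y) - dist x y|
      = dist (dist (Ψ (f x)) (Ψ (f y))) (dist (Φ x) (Φ y)) := by
        rw [hΨ.dist_eq, hΦ.dist_eq, Real.dist_eq]
    _ ≤ dist (Ψ (f x)) (Φ x) + dist (Ψ (f y)) (Φ y) := dist_dist_dist_le _ _ _ _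
    _ < 2 * δ := by linarith [hf x, hf y, dist_comm (Ψ (f x)) (Φ x), dist_comm (Ψ (f y)) (Φ y)]

theorem exists_equiv_of_ghDist_lt {X Y : Type*} [MetricSpace X] [CompactSpace X] [Nonempty X]
    [MetricSpace Y] [CompactSpace Y] [Nonempty Y] [Finite Y] (hcard : Nat.card X = Nat.card Y)
    {δ : ℝ} (hsep : Pairwise fun x y : X ↦ 2 * δ ≤ dist x y) (h : ghDist X Y < δ) :
    ∃ e : X ≃ Y, ∀ x y, |dist (e x) (e y) - dist x y| < 2 * δ := by
  obtain ⟨f, hf⟩ := exists_forall_abs_dist_sub_lt_of_ghDist_lt h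
  have hinj : f.Injective := fun x y hxy ↦ by
    by_contra hne
    have hdist := hf x y
    rw [hxy, dist_self, zero_sub, abs_neg, abs_of_nonneg dist_nonneg] at hdist
    exact hdist.not_ge (hsep hne)
  exact ⟨.ofBijective f ((Nat.bijective_iff_injective_and_card f).2 ⟨hinj, hcard⟩), hf⟩

theorem exists_pos_pairwise_le_dist (X : Type*) [MetricSpace X] [Finite X] :
    ∃ r > 0, Pairwise fun x y : X ↦ r ≤ dist x y := by
  have hlt : ∀ᶠ r : ℝ in nhdsWithin 0 (Set.Ioi 0), ∀ x y : X, x ≠ y → r ≤ dist x y := by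
    simp only [Filter.eventually_all]
    exact fun x y hxy ↦ Filter.Eventually.filter_mono nhdsWithin_le_nhds
      (eventually_le_nhds (dist_pos.2 hxy))
  obtain ⟨r, hle, hr⟩ := (hlt.and self_mem_nhdsWithin).exists
  exact ⟨r, hr, hle⟩

theorem continuous_comp_relabel {α β : Type*} (e : α → β) :
    Continuous fun (M : β → β → ℝ) i j ↦ M (e i) (e j) := by
  fun_prop

/-- The space `GH_{=n}` of isometry classes of `n`-point metric spaces. -/
abbrev GHFin (n : ℕ) : Type := ↥{p : GHSpace | Nat.card p.Rep = n}

namespace GHFin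

variable {n : ℕ}

instance finite_rep [NeZero n] (p : GHFin n) : Finite p.1.Rep :=
  Nat.finite_of_card_ne_zero (p.2.trans_ne (NeZero.ne n))

theorem eventually_exists_equiv [NeZero n] (q : GHFin n) {U : Set (q.1.Rep → q.1.Rep → ℝ)}
    (hU : U ∈ nhds fun i j ↦ dist i j) :
    ∀ᶠ q' : GHFin n in nhds q, ∃ e : q.1.Rep ≃ q'.1.Rep, (fun i j ↦ dist (e i) (e j)) ∈ U := by
  have := Fintype.ofFinite q.1.Rep
  obtain ⟨η, hη, hball⟩ := Metric.mem_nhds_iff.1 hU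
  obtain ⟨r, hr, hsep⟩ := exists_pos_pairwise_le_dist q.1.Rep
  have hδ : 0 < min r η / 2 := by positivity
  filter_upwards [Metric.ball_mem_nhds q hδ] with q' hq'
  have hdist : ghDist q.1.Rep q'.1.Rep < min r η / 2 := by
    rw [← dist_ghDist]
    exact Metric.mem_ball'.1 hq'
  obtain ⟨e, he⟩ := exists_equiv_of_ghDist_lt (q.2.trans q'.2.symm)
    (fun x y hxy ↦ by linarith [hsep hxy, min_le_left r η]) hdist
  refine ⟨e, hball ((dist_pi_lt_iff hη).2 fun i ↦ (dist_pi_lt_iff hη).2 fun j ↦ ?_)⟩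
  exact (he i j).trans_le (by linarith [min_le_right r η])

/-- The classes of the spaces that can be labelled by `α` in such a way that the matrix of
distances lies in `S`. -/
def withDistIn {α : Type*} (S : Set (α → α → ℝ)) : Set (GHFin n) :=
  {q | ∃ e : α ≃ q.1.Rep, (fun i j ↦ dist (e i) (e j)) ∈ S}

theorem isOpen_withDistIn [NeZero n] {α : Type*} {S : Set (α → α → ℝ)} (hS : IsOpen S) :
    IsOpen (withDistIn S : Set (GHFin n)) := by
  refine isOpen_iff_mem_nhds.2 ?_
  rintro q ⟨e, he⟩
  filter_upwards [q.eventually_exists_equiv ((hS.preimage (continuous_comp_relabel e)).mem_nhds he)]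
  rintro q' ⟨f, hf⟩
  exact ⟨e.trans f, hf⟩

theorem isClosed_withDistIn [NeZero n] {α : Type*} {S : Set (α → α → ℝ)}
    (hS : IsClosed S) : IsClosed (withDistIn S : Set (GHFin n)) := by
  refine isOpen_compl_iff.1 (isOpen_iff_mem_nhds.2 fun q hq ↦ ?_)
  have hU : IsOpen (⋂ e : α ≃ q.1.Rep,
      (fun (M : q.1.Rep → q.1.Rep → ℝ) i j ↦ M (e i) (e j)) ⁻¹' Sᶜ) :=
    isOpen_iInter_of_finite fun e ↦ hS.isOpen_compl.preimage (continuous_comp_relabel e)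
  filter_upwards [q.eventually_exists_equiv
    (hU.mem_nhds (Set.mem_iInter.2 fun e he ↦ hq ⟨e, he⟩))]
  rintro q' ⟨f, hf⟩ ⟨e, he⟩
  exact Set.mem_iInter.1 hf (e.trans f.symm) (by simpa using he)

/-- The classes of the spaces in which no two distinct points have their distance in `D`. -/
def avoiding (D : Set ℝ) : Set (GHFin n) :=
  {p | Pairwise fun a b : p.1.Rep ↦ dist a b ∉ D}

theorem isZeroDimIn_avoiding [NeZero n] {D : Set ℝ} (hD : Dense D) :
    IsZeroDimIn (avoiding D : Set (GHFin n)) := by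
  intro p _ u hu
  obtain ⟨ρ, hρ, hball⟩ := Metric.mem_nhds_iff.1 hu
  choose a haD ha using fun i j : p.1.Rep ↦ hD.exists_between (sub_lt_self (dist i j) hρ)
  choose b hbD hb using fun i j : p.1.Rep ↦ hD.exists_between (lt_add_of_pos_right (dist i j) hρ)
  let openBox : Set (p.1.Rep → p.1.Rep → ℝ) :=
    Set.univ.pi fun i ↦ Set.univ.pi fun j ↦ Set.Ioo (a i j) (b i j)
  let closedBox : Set (p.1.Rep → p.1.Rep → ℝ) :=
    Set.univ.pi fun i ↦ Set.univ.pi fun j ↦ Set.Icc (a i j) (b i j)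
  have hopen : IsOpen openBox := isOpen_set_pi Set.finite_univ fun i _ ↦
    isOpen_set_pi Set.finite_univ fun j _ ↦ isOpen_Ioo
  have hclosed : IsClosed closedBox := isClosed_set_pi fun i _ ↦
    isClosed_set_pi fun j _ ↦ isClosed_Icc
  refine ⟨withDistIn openBox, ?_, isOpen_withDistIn hopen,
    ⟨Equiv.refl _, fun i _ j _ ↦ ⟨(ha i j).2, (hb i j).1⟩⟩, Set.disjoint_left.2 ?_⟩
  · rintro q ⟨e, he⟩
    refine hball (Metric.mem_ball'.2 ?_)
    have hle : ghDist p.1.Rep q.1.Rep ≤ ρ / 2 := ghDist_le_of_equiv e fun i j ↦ by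
      have hij := he i trivial j trivial
      exact abs_le.2 ⟨by linarith [hij.1, (ha i j).1], by linarith [hij.2, (hb i j).2]⟩
    rw [← dist_ghDist] at hle
    exact hle.trans_lt (half_lt_self hρ)
  · intro q hq hqZ
    rw [(isOpen_withDistIn hopen).frontier_eq] at hq
    have hsub : (withDistIn openBox : Set (GHFin n)) ⊆ withDistIn closedBox := fun q ⟨e, he⟩ ↦
      ⟨e, fun i _ j _ ↦ Set.Ioo_subset_Icc_self (he i trivial j trivial)⟩
    obtain ⟨e, he⟩ := closure_minimal hsub (isClosed_withDistIn hclosed) hq.1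
    refine hq.2 ⟨e, fun i _ j _ ↦ ?_⟩
    obtain rfl | hij := eq_or_ne i j
    · simpa using And.intro (ha i i).2 (hb i i).1
    · have hnotMem : dist (e i) (e j) ∉ D := hqZ (e.injective.ne hij)
      have hmem := he i trivial j trivial
      exact ⟨hmem.1.lt_of_ne (ne_of_mem_of_not_mem (haD i j) hnotMem),
        hmem.2.lt_of_ne (ne_of_mem_of_not_mem (hbD i j) hnotMem).symm⟩

theorem iUnion_avoiding_eq_univ [NeZero n] {ι : Type*} [Fintype ι] {D : ι → Set ℝ}
    (hD : Pairwise (Function.onFun Disjoint D)) (hcard : n.choose 2 < Fintype.card ι) :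
    ⋃ k, (avoiding (D k) : Set (GHFin n)) = Set.univ := by
  classical
  refine Set.eq_univ_of_forall fun p ↦ Set.mem_iUnion.2 ?_
  by_contra hcon
  simp only [avoiding, Pairwise, Set.mem_ofPred_eq] at hcon
  push Not at hcon
  choose a b hab hmem using hcon
  have := Fintype.ofFinite p.1.Rep
  let pair (k : ι) : {s : Sym2 p.1.Rep // ¬s.IsDiag} := ⟨s(a k, b k), by simpa using hab k⟩
  have hlt : Fintype.card {s : Sym2 p.1.Rep // ¬s.IsDiag} < Fintype.card ι := by
    rwa [Sym2.card_subtype_not_diag, ← Nat.card_eq_fintype_card, p.2]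
  obtain ⟨k, l, hkl, hpair⟩ := Fintype.exists_ne_map_eq_of_card_lt pair hlt
  have hdist : dist (a k) (b k) = dist (a l) (b l) := by
    obtain ⟨h₁, h₂⟩ | ⟨h₁, h₂⟩ := Sym2.eq_iff.1 (congrArg Subtype.val hpair)
    · rw [h₁, h₂]
    · rw [h₁, h₂, dist_comm]
  exact Set.disjoint_left.1 (hD hkl) (hmem k) (hdist ▸ hmem l)

end GHFin

theorem dense_range_ratCast_add (c : ℝ) : Dense (Set.range fun q : ℚ ↦ (q : ℝ) + c) :=
  (add_right_surjective c).denseRange.comp Rat.denseRange_cast (continuous_add_const c)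

theorem pairwise_disjoint_range_ratCast_add_mul {x : ℝ} (hx : Irrational x) :
    Pairwise (Function.onFun Disjoint fun k : ℕ ↦ Set.range fun q : ℚ ↦ (q : ℝ) + k * x) := by
  intro k l hkl
  refine Set.disjoint_left.2 ?_
  rintro _ ⟨q, rfl⟩ ⟨r, hqr⟩
  have hne : (k : ℤ) - l ≠ 0 := sub_ne_zero.2 (Nat.cast_injective.ne hkl)
  refine (hx.intCast_mul hne).ne_rat (r - q) ?_
  push_cast
  linarith

theorem GHFin.covDimLE (n : ℕ) [NeZero n] : CovDimLE (GHFin n) (n.choose 2) :=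
  .of_iUnion_isZeroDimIn (fun _ ↦ isZeroDimIn_avoiding (dense_range_ratCast_add _))
    (iUnion_avoiding_eq_univ ((pairwise_disjoint_range_ratCast_add_mul
      irrational_sqrt_two).comp_of_injective Fin.val_injective) (by simp))

section PairMetrics

variable {α : Type*}

/-- The type `α` with the metric in which the distance between distinct points `i` and `j` is
`f s(i, j)`. The triangle inequality holds because `f` takes values in `[1, 2]`. -/
def PairMetric (_f : {s : Sym2 α // ¬s.IsDiag} → Set.Icc (1 : ℝ) 2) : Type _ := α

namespace PairMetric

variable {f g : {s : Sym2 α // ¬s.IsDiag} → Set.Icc (1 : ℝ) 2}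

instance [Finite α] : Finite (PairMetric f) := inferInstanceAs (Finite α)

instance [Nonempty α] : Nonempty (PairMetric f) := inferInstanceAs (Nonempty α)

open scoped Classical in
noncomputable instance : Dist (PairMetric f) where
  dist (i j : α) := if h : i = j then 0 else f ⟨s(i, j), h⟩

theorem dist_self' (i : PairMetric f) : dist i i = 0 := dif_pos rfl

theorem dist_of_ne {i j : α} (h : i ≠ j) :
    dist (α := PairMetric f) i j = f ⟨s(i, j), h⟩ := dif_neg h

theorem dist_mem_Icc {i j : PairMetric f} (h : i ≠ j) : dist i j ∈ Set.Icc (1 : ℝ) 2 :=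
  dist_of_ne h ▸ Subtype.property _

theorem dist_nonneg' (i j : PairMetric f) : 0 ≤ dist i j := by
  obtain rfl | h := eq_or_ne i j
  · exact (dist_self' i).ge
  · exact zero_le_one.trans (dist_mem_Icc h).1

noncomputable instance : MetricSpace (PairMetric f) where
  dist_self := dist_self'
  dist_comm i j := by
    obtain rfl | h := eq_or_ne i j
    · rfl
    · exact (dist_of_ne h).trans
        ((congrArg (fun p ↦ (f p : ℝ)) (Subtype.ext Sym2.eq_swap)).trans (dist_of_ne h.symm).symm)
  dist_triangle i j k := by
    obtain rfl | hij := eq_or_ne i j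
    · rw [dist_self', zero_add]
    obtain rfl | hjk := eq_or_ne j k
    · rw [dist_self', add_zero]
    obtain rfl | hik := eq_or_ne i k
    · exact (dist_self' i).trans_le (add_nonneg (dist_nonneg' _ _) (dist_nonneg' _ _))
    · linarith [(dist_mem_Icc hij).1, (dist_mem_Icc hjk).1, (dist_mem_Icc hik).2]
  eq_of_dist_eq_zero {i j} h := by
    by_contra hne
    linarith [(dist_mem_Icc hne).1]

theorem ghDist_le [Finite α] [Nonempty α] {ε : ℝ} (hε : 0 ≤ ε)
    (h : ∀ p, dist (f p) (g p) ≤ ε) : ghDist (PairMetric f) (PairMetric g) ≤ ε / 2 := by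
  let relabel : PairMetric f ≃ PairMetric g := Equiv.refl α
  refine ghDist_le_of_equiv relabel fun i j ↦ ?_
  obtain rfl | hij := eq_or_ne i j
  · simpa using hε
  · rw [abs_sub_comm]
    exact dist_of_ne (f := f) hij ▸ dist_of_ne (f := g) hij ▸ h ⟨s(i, j), hij⟩

theorem exists_apply_eq_of_isometryEquiv (e : PairMetric f ≃ᵢ PairMetric g)
    (p : {s : Sym2 α // ¬s.IsDiag}) : ∃ p', g p' = f p := by
  obtain ⟨s, hs⟩ := p
  induction s with
  | _ i j =>
    have hne : e i ≠ e j := e.injective.ne hs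
    refine ⟨⟨s(e i, e j), hne⟩, Subtype.ext ?_⟩
    exact (dist_of_ne hne).symm.trans ((e.dist_eq i j).trans (dist_of_ne hs))

end PairMetric

/-- The class in `GH_{=n}` of the space with prescribed distances between distinct points. -/
noncomputable def GHFin.ofPairs {n : ℕ} [NeZero n]
    (f : {s : Sym2 (Fin n) // ¬s.IsDiag} → Set.Icc (1 : ℝ) 2) : GHFin n :=
  ⟨toGHSpace (PairMetric f), by
    obtain ⟨e⟩ := toGHSpace_eq_toGHSpace_iff_isometryEquiv.1
      (toGHSpace (PairMetric f)).toGHSpace_rep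
    exact (Nat.card_congr e.toEquiv).trans (Nat.card_fin n)⟩

theorem GHFin.continuous_ofPairs {n : ℕ} [NeZero n] :
    Continuous (ofPairs (n := n)) := by
  refine (LipschitzWith.of_dist_le_mul (K := 1) fun f g ↦ ?_).continuous
  have hle : dist (ofPairs f) (ofPairs g) ≤ dist f g / 2 :=
    PairMetric.ghDist_le dist_nonneg (dist_le_pi_dist f g)
  rw [NNReal.coe_one, one_mul]
  exact hle.trans (half_le_self dist_nonneg)

end PairMetrics

section Stagger

variable {I : Type*} [Fintype I]

/-- Rescales the coordinates `r i ∈ [0, 1]` so that distinct coordinates take values in disjoint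
subintervals of `[1, 2]`. -/
noncomputable def stagger (r : I → unitInterval) (i : I) : Set.Icc (1 : ℝ) 2 :=
  ⟨1 + ((Fintype.equivFin I i : ℕ) + r i / 2 : ℝ) / Fintype.card I, by
    have hcard : ((Fintype.equivFin I i : ℕ) : ℝ) + 1 ≤ Fintype.card I := by
      exact_mod_cast (Fintype.equivFin I i).isLt
    have hr := (r i).2
    refine ⟨le_add_of_nonneg_right (by have := hr.1; positivity), ?_⟩
    have hle : ((Fintype.equivFin I i : ℕ) + r i / 2 : ℝ) / Fintype.card I ≤ 1 :=
      (div_le_one (by linarith)).2 (by linarith [hr.2])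
    linarith⟩

theorem continuous_stagger : Continuous (stagger (I := I)) := by
  unfold stagger
  fun_prop

theorem eq_and_eq_of_stagger_eq_stagger {r r' : I → unitInterval} {i j : I}
    (h : stagger r i = stagger r' j) : i = j ∧ r i = r' j := by
  have hcard : (Fintype.card I : ℝ) ≠ 0 := Nat.cast_ne_zero.2 (@Fintype.card_ne_zero I _ ⟨i⟩)
  have hval : ((Fintype.equivFin I i : ℕ) + r i / 2 : ℝ) =
      (Fintype.equivFin I j : ℕ) + r' j / 2 :=
    (div_left_inj' hcard).1 (add_left_cancel (congrArg Subtype.val h))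
  have hr := (r i).2
  have hr' := (r' j).2
  have hij : (Fintype.equivFin I i : ℕ) < Fintype.equivFin I j + 1 := by
    have : ((Fintype.equivFin I i : ℕ) : ℝ) < (Fintype.equivFin I j : ℕ) + 1 := by
      linarith [hr.1, hr'.2]
    exact_mod_cast this
  have hji : (Fintype.equivFin I j : ℕ) < Fintype.equivFin I i + 1 := by
    have : ((Fintype.equivFin I j : ℕ) : ℝ) < (Fintype.equivFin I i : ℕ) + 1 := by
      linarith [hr.2, hr'.1]
    exact_mod_cast this
  obtain rfl : i = j := (Fintype.equivFin I).injective (Fin.ext (by omega))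
  exact ⟨rfl, Subtype.ext (by linarith)⟩

/-- The coordinates of a point of the standard simplex on `Option I` indexed by `I`; they
determine the remaining one. -/
def someCoords (x : stdSimplex ℝ (Option I)) (i : I) : unitInterval :=
  ⟨x (some i), mem_Icc_of_mem_stdSimplex x.2 _⟩

theorem continuous_someCoords : Continuous (someCoords (I := I)) :=
  continuous_pi fun i ↦ ((continuous_apply (some i)).comp continuous_subtype_val).subtype_mk _

theorem someCoords_injective : Function.Injective (someCoords (I := I)) := by
  intro x y hxy
  have hsome (i : I) : x (some i) = y (some i) := congrArg Subtype.val (congrFun hxy i)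
  have hsum := (stdSimplex.sum_eq_one x).trans (stdSimplex.sum_eq_one y).symm
  simp only [Fintype.sum_option, hsome, add_left_inj] at hsum
  exact stdSimplex.ext (funext fun | none => hsum | some i => hsome i)

end Stagger

theorem GHFin.exists_isClosedEmbedding_stdSimplex (n : ℕ) [NeZero n] :
    ∃ φ : stdSimplex ℝ (Option {s : Sym2 (Fin n) // ¬s.IsDiag}) → GHFin n,
      Topology.IsClosedEmbedding φ := by
  refine ⟨fun x ↦ ofPairs (stagger (someCoords x)),
    (continuous_ofPairs.comp (continuous_stagger.comp continuous_someCoords)).isClosedEmbedding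
      fun x y hxy ↦ someCoords_injective (funext fun p ↦ ?_)⟩
  obtain ⟨e⟩ := toGHSpace_eq_toGHSpace_iff_isometryEquiv.1 (congrArg Subtype.val hxy)
  obtain ⟨p', hp'⟩ := PairMetric.exists_apply_eq_of_isometryEquiv e p
  obtain ⟨rfl, hcoord⟩ := eq_and_eq_of_stagger_eq_stagger hp'
  exact hcoord.symm

theorem GHFin.choose_two_le_of_covDimLE {n k : ℕ} [NeZero n] (hk : CovDimLE (GHFin n) k) :
    n.choose 2 ≤ k := by
  obtain ⟨φ, hφ⟩ := exists_isClosedEmbedding_stdSimplex n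
  have hcard := (hk.of_isClosedEmbedding_s14 hφ).card_le_of_stdSimplex
  rw [Fintype.card_option, Sym2.card_subtype_not_diag, Fintype.card_fin] at hcard
  exact Nat.le_of_succ_le_succ hcard

end FiniteSpaces

/-- The space `GH_{=n}` of isometry classes of `n`-point metric spaces with the
Gromov-Hausdorff distance has covering dimension `n(n-1)/2`. -/
theorem stmt14 (n : ℕ) (hn : 1 ≤ n) :
    covDim ↥{p : GromovHausdorff.GHSpace | Nat.card p.Rep = n} =
      (↑(n * (n - 1) / 2) : ℕ∞) := by
  have : NeZero n := ⟨Nat.one_le_iff_ne_zero.1 hn⟩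
  rw [← Nat.choose_two_right]
  refine le_antisymm (sInf_le ⟨_, rfl, GHFin.covDimLE n⟩) (le_sInf ?_)
  rintro _ ⟨k, rfl, hk⟩
  exact_mod_cast GHFin.choose_two_le_of_covDimLE hk
end
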